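/- arXiv:2206.09014 — 6 statements merged into one kernel-verified Lean document; each statement's English description precedes it below -/
import Mathlib

section
/- For every edge e of the graph, there exists a unique bounded linear operator T_e on L²(X,μ) such that for every φ ∈ L²(X,μ), T_e φ agrees μ-almost everywhere with the function equal to Φ_{f_e⁻¹}(x)^{1/2}·φ(f_e⁻¹(x)) for x ∈ R_e and equal to 0 for x ∉ R_e. Moreover, for every φ ∈ L²(X,μ) one has ‖T_e φ‖² = ∫_{D_{r(e)}} |φ|² dμ, and the operator identity T_e* T_e = M_{χ_{D_{r(e)}}} holds, where M_{χ_{D_{r(e)}}} denotes the operator of multiplication by the indicator function of D_{r(e)}. -/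
open MeasureTheory Set
open scoped ENNReal NNReal

section

variable {V0 E1 X : Type*}

/-- A relative `G`-branching system, relative to a set `V` of vertices, on a measure space
`(X, μ)`, for a directed graph with vertices `V0`, edges `E1`, range map `r` and source map
`s`. The data consists of measurable sets `R e` (for edges) and `D v` (for vertices),
together with measurable maps `f e : D (r e) → R e` and `finv e : R e → D (r e)` that are
mutually inverse `μ`-a.e. and whose pushforward measures are absolutely continuous w.r.t.
`μ`. -/
structure RelBranchingSystem [MeasurableSpace X] (r s : E1 → V0) (V : Set V0)
    (μ : Measure X) (R : E1 → Set X) (D : V0 → Set X) (f finv : E1 → X → X) : Prop where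
  measR : ∀ e, MeasurableSet (R e)
  measD : ∀ v, MeasurableSet (D v)
  measf : ∀ e, Measurable (f e)
  measfinv : ∀ e, Measurable (finv e)
  disjR : ∀ e e', e ≠ e' → μ (R e ∩ R e') = 0
  disjD : ∀ u v, u ≠ v → μ (D u ∩ D v) = 0
  RsubD : ∀ e, μ (R e \ D (s e)) = 0
  CK : ∀ v ∈ V, (∃ e, s e = v) → μ (symmDiff (D v) (⋃ e ∈ {e' | s e' = v}, R e)) = 0
  mapsf : ∀ e, MapsTo (f e) (D (r e)) (R e)
  mapsfinv : ∀ e, MapsTo (finv e) (R e) (D (r e))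
  inv_right : ∀ e, ∀ᵐ x ∂μ.restrict (R e), f e (finv e x) = x
  inv_left : ∀ e, ∀ᵐ t ∂μ.restrict (D (r e)), finv e (f e t) = t
  ac_f : ∀ e, (μ.restrict (D (r e))).map (f e) ≪ μ
  ac_finv : ∀ e, (μ.restrict (R e)).map (finv e) ≪ μ

/-- The Radon–Nikodym derivative of the pushforward of `μ` restricted to `S` under `h`,
with respect to `μ`.  Taking `S = D (r e)`, `h = f e` gives `Φ_{f_e⁻¹}`, and taking
`S = R e`, `h = finv e` gives `Φ_{f_e}`. -/
noncomputable def pushDeriv [MeasurableSpace X] (μ : Measure X) (S : Set X) (h : X → X) :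
    X → ℝ≥0∞ :=
  ((μ.restrict S).map h).rnDeriv μ

/-- The function `x ↦ χ_{R e}(x) · Φ_{f_e⁻¹}(x)^{1/2} · φ(f_e⁻¹ x)`, i.e. the prospective
action of the partial isometry `T_e` on a function `φ`. -/
noncomputable def Taction [MeasurableSpace X] (μ : Measure X) (Re DRe : Set X)
    (fe finve : X → X) (φ : X → ℂ) : X → ℂ :=
  Re.indicator fun x => (Real.sqrt ((pushDeriv μ DRe fe x).toReal) : ℂ) * φ (finve x)

section Aux

variable [MeasurableSpace X] {μ : Measure X} [SigmaFinite μ] {R D : Set X} {f g : X → X}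

theorem aux_sigmaFinite (hD : MeasurableSet D)
    (hf : Measurable f) (hg : Measurable g)
    (hl : ∀ᵐ t ∂μ.restrict D, g (f t) = t) :
    SigmaFinite ((μ.restrict D).map f) := by
  have hid : ((μ.restrict D).map f).map g = μ.restrict D := by
    rw [Measure.map_map hg hf]
    have : (g ∘ f) =ᵐ[μ.restrict D] id := hl
    rw [Measure.map_congr this, Measure.map_id]
  have : SigmaFinite (((μ.restrict D).map f).map g) := by rw [hid]; infer_instance
  exact SigmaFinite.of_map _ hg.aemeasurable this

theorem aux_aesm {E : Type*} [NormedAddCommGroup E] (hR : MeasurableSet R)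
    (hg : Measurable g) (hacg : (μ.restrict R).map g ≪ μ)
    {h : X → E} (hh : AEStronglyMeasurable h μ) :
    AEStronglyMeasurable (R.indicator fun x => h (g x)) μ := by
  rw [aestronglyMeasurable_indicator_iff hR]
  exact hh.comp_quasiMeasurePreserving ⟨hg, hacg⟩

theorem aux_ind {E : Type*} [NormedAddCommGroup E] [NormedSpace ℝ E] (h : X → E) :
    (R.indicator fun x => (pushDeriv μ D f x).toReal • h (g x)) =
    fun x => (((μ.restrict D).map f).rnDeriv μ x).toReal • (R.indicator fun x => h (g x)) x := by
  ext x
  by_cases hx : x ∈ R <;> simp [hx, pushDeriv]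

theorem aux_integral {E : Type*} [NormedAddCommGroup E] [NormedSpace ℝ E]
    (hR : MeasurableSet R) (hD : MeasurableSet D)
    (hf : Measurable f) (hg : Measurable g) (hm : MapsTo f D R)
    (hl : ∀ᵐ t ∂μ.restrict D, g (f t) = t)
    (hac : (μ.restrict D).map f ≪ μ) (hacg : (μ.restrict R).map g ≪ μ)
    {h : X → E} (hh : AEStronglyMeasurable h μ) :
    (∫ x, (R.indicator fun x => (pushDeriv μ D f x).toReal • h (g x)) x ∂μ = ∫ x in D, h x ∂μ) ∧
    (Integrable h μ →
      Integrable (R.indicator fun x => (pushDeriv μ D f x).toReal • h (g x)) μ) := by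
  have := aux_sigmaFinite hD hf hg hl
  have h1 := (aux_aesm hR hg hacg hh).mono_ac hac
  have h2 : (fun t => (R.indicator fun x => h (g x)) (f t)) =ᵐ[μ.restrict D] h := by
    filter_upwards [hl, ae_restrict_mem hD] with t ht htD
    rw [indicator_of_mem (hm htD), ht]
  rw [aux_ind]
  constructor
  · rw [integral_rnDeriv_smul hac, integral_map hf.aemeasurable h1]
    exact integral_congr_ae h2
  · intro hi
    rw [integrable_rnDeriv_smul_iff hac, integrable_map_measure h1 hf.aemeasurable]
    exact (integrable_congr h2).2 hi.restrict

theorem aux_congr (hR : MeasurableSet R) (hg : Measurable g)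
    (hacg : (μ.restrict R).map g ≪ μ) {φ ψ : X → ℂ} (h : φ =ᵐ[μ] ψ) :
    Taction μ R D f g φ =ᵐ[μ] Taction μ R D f g ψ := by
  have h1 : ∀ᵐ x ∂μ.restrict R, φ (g x) = ψ (g x) :=
    (Measure.QuasiMeasurePreserving.mk hg hacg).ae h
  rw [ae_restrict_iff' hR] at h1
  filter_upwards [h1] with x hx
  by_cases hxR : x ∈ R
  · simp [Taction, hxR, hx hxR]
  · simp [Taction, hxR]

theorem aux_inner (φ ψ : X → ℂ) :
    (fun x => inner ℂ (Taction μ R D f g φ x) (Taction μ R D f g ψ x)) =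
    R.indicator fun x => (pushDeriv μ D f x).toReal • inner ℂ (φ (g x)) (ψ (g x)) := by
  ext x
  by_cases hx : x ∈ R
  · simp only [Taction, indicator_of_mem hx, RCLike.inner_apply, map_mul, Complex.conj_ofReal,
      Complex.real_smul]
    have : ((pushDeriv μ D f x).toReal : ℂ) = (Real.sqrt ((pushDeriv μ D f x).toReal) : ℂ) *
        (Real.sqrt ((pushDeriv μ D f x).toReal) : ℂ) := by
      rw [← Complex.ofReal_mul, Real.mul_self_sqrt ENNReal.toReal_nonneg]
    rw [this]; ring
  · simp [Taction, hx]

theorem aux_sq (φ : X → ℂ) :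
    (fun x => ‖Taction μ R D f g φ x‖ ^ 2) =
    R.indicator fun x => (pushDeriv μ D f x).toReal • ‖φ (g x)‖ ^ 2 := by
  ext x
  by_cases hx : x ∈ R
  · simp only [Taction, indicator_of_mem hx, norm_mul, mul_pow, Complex.norm_real,
      Real.norm_eq_abs, sq_abs, smul_eq_mul]
    rw [Real.sq_sqrt ENNReal.toReal_nonneg]
  · simp [Taction, hx]

theorem aux_memLp (hR : MeasurableSet R) (hD : MeasurableSet D)
    (hf : Measurable f) (hg : Measurable g) (hm : MapsTo f D R)
    (hl : ∀ᵐ t ∂μ.restrict D, g (f t) = t)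
    (hac : (μ.restrict D).map f ≪ μ) (hacg : (μ.restrict R).map g ≪ μ)
    {φ : X → ℂ} (hφ : MemLp φ 2 μ) : MemLp (Taction μ R D f g φ) 2 μ := by
  have hm1 : AEStronglyMeasurable (Taction μ R D f g φ) μ := by
    have h1 := aux_aesm hR hg hacg hφ.1
    have h2 : Measurable fun x => (Real.sqrt ((pushDeriv μ D f x).toReal) : ℂ) := by
      have : Measurable (pushDeriv μ D f) := Measure.measurable_rnDeriv _ _
      fun_prop
    have := h2.aestronglyMeasurable.mul h1
    convert this using 1
    ext x
    by_cases hx : x ∈ R <;> simp [Taction, hx]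
  rw [memLp_two_iff_integrable_sq_norm hm1, aux_sq]
  exact (aux_integral hR hD hf hg hm hl hac hacg
    (h := fun x => ‖φ x‖ ^ 2) (hφ.1.norm.pow 2)).2
    ((memLp_two_iff_integrable_sq_norm hφ.1).1 hφ)

theorem aux_normsq (φ : Lp ℂ 2 μ) : ‖φ‖ ^ 2 = ∫ x, ‖(φ : X → ℂ) x‖ ^ 2 ∂μ := by
  have h := L2.inner_def (𝕜 := ℂ) φ φ
  rw [inner_self_eq_norm_sq_to_K] at h
  have h2 : (∫ x, inner ℂ ((φ : X → ℂ) x) ((φ : X → ℂ) x) ∂μ)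
      = ((∫ x, ‖(φ : X → ℂ) x‖ ^ 2 ∂μ : ℝ) : ℂ) := by
    rw [← integral_complex_ofReal]
    congr 1
    ext x
    rw [inner_self_eq_norm_sq_to_K]
    simp
  rw [h2] at h
  apply Complex.ofReal_injective
  rw [Complex.ofReal_pow]
  exact h

end Aux

/-- For every edge `e` there is a unique bounded operator `T_e` on
`L²(X, μ)` with `T_e φ =ᵐ χ_{R_e} · Φ_{f_e⁻¹}^{1/2} · (φ ∘ f_e⁻¹)`; moreover any such
operator satisfies `‖T_e φ‖² = ∫_{D_{r e}} |φ|² dμ` and `T_e* T_e` is multiplication by the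
indicator of `D (r e)`. -/
theorem statement0 [MeasurableSpace X] {μ : Measure X} [SigmaFinite μ]
    (r s : E1 → V0) [Fintype V0] [Fintype E1] (V : Set V0)
    (R : E1 → Set X) (D : V0 → Set X) (f finv : E1 → X → X)
    (hbs : RelBranchingSystem r s V μ R D f finv) (e : E1) :
    (∃! T : Lp ℂ 2 μ →L[ℂ] Lp ℂ 2 μ,
      ∀ φ : Lp ℂ 2 μ, ⇑(T φ) =ᵐ[μ] Taction μ (R e) (D (r e)) (f e) (finv e) ⇑φ) ∧
    (∀ T : Lp ℂ 2 μ →L[ℂ] Lp ℂ 2 μ,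
      (∀ φ : Lp ℂ 2 μ, ⇑(T φ) =ᵐ[μ] Taction μ (R e) (D (r e)) (f e) (finv e) ⇑φ) →
      (∀ φ : Lp ℂ 2 μ, ‖T φ‖ ^ 2 = ∫ x in D (r e), ‖(φ : X → ℂ) x‖ ^ 2 ∂μ) ∧
      (∀ φ : Lp ℂ 2 μ, ⇑((ContinuousLinearMap.adjoint T) (T φ)) =ᵐ[μ]
        (D (r e)).indicator fun x => (φ : X → ℂ) x)) := by
  have hR := hbs.measR e
  have hD := hbs.measD (r e)
  have hf := hbs.measf e
  have hg := hbs.measfinv e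
  have hm := hbs.mapsf e
  have hl := hbs.inv_left e
  have hac := hbs.ac_f e
  have hacg := hbs.ac_finv e
  have hmem : ∀ φ : Lp ℂ 2 μ, MemLp (Taction μ (R e) (D (r e)) (f e) (finv e) φ) 2 μ :=
    fun φ => aux_memLp hR hD hf hg hm hl hac hacg (Lp.memLp φ)
  have hnorm : ∀ φ ψ : Lp ℂ 2 μ,
      ψ =ᵐ[μ] Taction μ (R e) (D (r e)) (f e) (finv e) φ →
      ‖ψ‖ ^ 2 = ∫ x in D (r e), ‖(φ : X → ℂ) x‖ ^ 2 ∂μ := by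
    intro φ ψ h
    rw [aux_normsq, ← (aux_integral hR hD hf hg hm hl hac hacg
      (h := fun x => ‖(φ : X → ℂ) x‖ ^ 2) ((Lp.aestronglyMeasurable φ).norm.pow 2)).1, ← aux_sq]
    apply integral_congr_ae
    filter_upwards [h] with x hx
    rw [hx]
  refine ⟨?_, ?_⟩
  · let L : Lp ℂ 2 μ →ₗ[ℂ] Lp ℂ 2 μ :=
      { toFun := fun φ => (hmem φ).toLp _
        map_add' := by
          intro φ ψ
          rw [← MemLp.toLp_add, MemLp.toLp_eq_toLp_iff]
          refine (aux_congr hR hg hacg (Lp.coeFn_add φ ψ)).trans (Filter.EventuallyEq.of_eq ?_)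
          ext x
          by_cases hx : x ∈ R e <;> simp [Taction, hx, mul_add]
        map_smul' := by
          intro c φ
          rw [RingHom.id_apply, ← MemLp.toLp_const_smul, MemLp.toLp_eq_toLp_iff]
          refine (aux_congr hR hg hacg (Lp.coeFn_smul c φ)).trans (Filter.EventuallyEq.of_eq ?_)
          ext x
          by_cases hx : x ∈ R e <;> simp [Taction, hx, mul_left_comm] }
    have hL : ∀ φ, L φ =ᵐ[μ] Taction μ (R e) (D (r e)) (f e) (finv e) φ :=
      fun φ => MemLp.coeFn_toLp (hmem φ)
    refine ⟨L.mkContinuous 1 ?_, hL, ?_⟩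
    · intro φ
      rw [one_mul]
      refine le_of_sq_le_sq ?_ (norm_nonneg _)
      rw [hnorm φ _ (hL φ), aux_normsq φ]
      exact setIntegral_le_integral
        ((memLp_two_iff_integrable_sq_norm (Lp.aestronglyMeasurable φ)).1 (Lp.memLp φ))
        (Filter.Eventually.of_forall fun x => by positivity)
    · intro T hT
      ext1 φ
      exact Lp.ext ((hT φ).trans (hL φ).symm)
  · intro T hT
    refine ⟨fun φ => hnorm φ _ (hT φ), fun φ => ?_⟩
    have hP : MemLp ((D (r e)).indicator fun x => (φ : X → ℂ) x) 2 μ :=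
      (Lp.memLp φ).indicator hD
    have key : (ContinuousLinearMap.adjoint T) (T φ) = hP.toLp _ := by
      refine ext_inner_right ℂ fun ψ => ?_
      rw [ContinuousLinearMap.adjoint_inner_left, L2.inner_def, L2.inner_def]
      have h1 : ∫ x, inner ℂ ((T φ : X → ℂ) x) ((T ψ : X → ℂ) x) ∂μ =
          ∫ x in D (r e), inner ℂ ((φ : X → ℂ) x) ((ψ : X → ℂ) x) ∂μ := by
        rw [← (aux_integral hR hD hf hg hm hl hac hacg
          (h := fun x => inner ℂ ((φ : X → ℂ) x) ((ψ : X → ℂ) x))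
          ((Lp.aestronglyMeasurable φ).inner (Lp.aestronglyMeasurable ψ))).1, ← aux_inner]
        apply integral_congr_ae
        filter_upwards [hT φ, hT ψ] with x hx hy
        rw [hx, hy]
      rw [h1, ← integral_indicator hD]
      apply integral_congr_ae
      filter_upwards [hP.coeFn_toLp] with x hx
      rw [hx]
      by_cases hxD : x ∈ D (r e) <;> simp [hxD]
    rw [key]
    exact hP.coeFn_toLp

end
end

section
/- For every edge e of the graph, the adjoint of the operator T_e (the bounded operator with T_e φ = Φ_{f_e⁻¹}^{1/2}·(φ∘f_e⁻¹) on R_e and 0 elsewhere) satisfies: for every ψ ∈ L²(X,μ), T_e* ψ agrees μ-almost everywhere with the function equal to Φ_{f_e}(t)^{1/2}·ψ(f_e(t)) for t ∈ D_{r(e)} and 0 elsewhere. Moreover T_e T_e* = M_{χ_{R_e}} (multiplication by the indicator of R_e); consequently T_e T_e* T_e = T_e (so T_e is a partial isometry) and M_{χ_{D_{s(e)}}} ∘ (T_e T_e*) = T_e T_e*, i.e., T_e T_e* ≤ M_{χ_{D_{s(e)}}}. -/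
open MeasureTheory Set
open scoped ENNReal NNReal

section

variable {V0 E1 X : Type*}

/-- One edge of a branching system: a pair of a.e. inverse nonsingular maps. -/
structure EdgePair [MeasurableSpace X] (μ : Measure X) (D R : Set X) (f g : X → X) : Prop where
  mD : MeasurableSet D
  mR : MeasurableSet R
  mf : Measurable f
  mg : Measurable g
  tof : MapsTo f D R
  tog : MapsTo g R D
  invR : ∀ᵐ x ∂μ.restrict R, f (g x) = x
  invD : ∀ᵐ t ∂μ.restrict D, g (f t) = t
  acf : (μ.restrict D).map f ≪ μ
  acg : (μ.restrict R).map g ≪ μ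

namespace EdgePair

variable [MeasurableSpace X] {μ : Measure X} {D R : Set X} {f g : X → X}

lemma swap (h : EdgePair μ D R f g) : EdgePair μ R D g f :=
  ⟨h.mR, h.mD, h.mg, h.mf, h.tog, h.tof, h.invD, h.invR, h.acg, h.acf⟩

lemma sigmaFinite_map [SigmaFinite μ] (h : EdgePair μ D R f g) :
    SigmaFinite ((μ.restrict D).map f) := by
  refine ⟨⟨⟨fun n => g ⁻¹' (spanningSets μ n), fun _ => trivial, fun n => ?_, ?_⟩⟩⟩
  · rw [Measure.map_apply h.mf (h.mg (measurableSet_spanningSets μ n))]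
    have : (f ⁻¹' (g ⁻¹' spanningSets μ n) : Set X) =ᵐ[μ.restrict D] spanningSets μ n := by
      filter_upwards [h.invD] with t ht
      change (g (f t) ∈ spanningSets μ n) = (t ∈ spanningSets μ n)
      rw [ht]
    rw [measure_congr this]
    exact (Measure.restrict_apply_le _ _).trans_lt (measure_spanningSets_lt_top μ n)
  · rw [← preimage_iUnion, iUnion_spanningSets, preimage_univ]

lemma lint [SigmaFinite μ] (h : EdgePair μ D R f g) {u : X → ℝ≥0∞} (hu : AEMeasurable u μ) :
    ∫⁻ x, pushDeriv μ D f x * u x ∂μ = ∫⁻ t in D, u (f t) ∂μ := by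
  have := h.sigmaFinite_map
  unfold pushDeriv
  rw [lintegral_rnDeriv_mul h.acf hu, lintegral_map' (hu.mono_ac h.acf) h.mf.aemeasurable]

lemma meas (μ : Measure X) (D : Set X) (f : X → X) : Measurable (pushDeriv μ D f) :=
  Measure.measurable_rnDeriv _ _

lemma lt_top [SigmaFinite μ] (h : EdgePair μ D R f g) : ∀ᵐ x ∂μ, pushDeriv μ D f x < ∞ := by
  have := h.sigmaFinite_map
  exact Measure.rnDeriv_lt_top _ _

lemma key [SigmaFinite μ] (h : EdgePair μ D R f g) :
    ∀ᵐ t ∂μ, pushDeriv μ R g t * pushDeriv μ D f (f t) = D.indicator 1 t := by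
  refine ae_eq_of_forall_setLIntegral_eq_of_sigmaFinite
    (f := fun t => pushDeriv μ R g t * pushDeriv μ D f (f t)) (g := D.indicator 1)
    ((meas μ R g).mul ((meas μ D f).comp h.mf)) (measurable_one.indicator h.mD) ?_
  intro A hA _
  have mA := h.mg hA
  calc ∫⁻ t in A, pushDeriv μ R g t * pushDeriv μ D f (f t) ∂μ
      = ∫⁻ t, pushDeriv μ R g t * A.indicator (fun t => pushDeriv μ D f (f t)) t ∂μ := by
        rw [← lintegral_indicator hA]
        refine lintegral_congr fun t => ?_
        by_cases ht : t ∈ A <;> simp [ht]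
    _ = ∫⁻ x in R, A.indicator (fun t => pushDeriv μ D f (f t)) (g x) ∂μ :=
        h.swap.lint (((meas μ D f).comp h.mf).indicator hA).aemeasurable
    _ = ∫⁻ x in R, pushDeriv μ D f x * (g ⁻¹' A).indicator 1 x ∂μ := by
        refine lintegral_congr_ae ?_
        filter_upwards [h.invR] with x hx
        by_cases ht : g x ∈ A <;> simp [ht, hx]
    _ = ∫⁻ x, pushDeriv μ D f x * (R ∩ g ⁻¹' A).indicator 1 x ∂μ := by
        rw [← lintegral_indicator h.mR]
        refine lintegral_congr fun t => ?_
        by_cases ht : t ∈ R <;> by_cases ht' : g t ∈ A <;> simp [ht, ht']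
    _ = ∫⁻ t in D, (R ∩ g ⁻¹' A).indicator 1 (f t) ∂μ :=
        h.lint (measurable_one.indicator (h.mR.inter mA)).aemeasurable
    _ = ∫⁻ t in D, A.indicator 1 t ∂μ := by
        refine lintegral_congr_ae ?_
        filter_upwards [h.invD, ae_restrict_mem h.mD] with t ht htD
        have := h.tof htD
        by_cases ht' : t ∈ A <;> simp [ht, ht', this]
    _ = ∫⁻ t in A, D.indicator 1 t ∂μ := by
        rw [← lintegral_indicator h.mD, ← lintegral_indicator hA]
        refine lintegral_congr fun t => ?_
        by_cases ht : t ∈ D <;> by_cases ht' : t ∈ A <;> simp [ht, ht']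

/-- a.e. statements pull back along `g` on `R`. -/
lemma ae_pull (h : EdgePair μ D R f g) {p : X → Prop} (hp : ∀ᵐ t ∂μ, p t) :
    ∀ᵐ x ∂μ, x ∈ R → p (g x) := by
  rw [← ae_restrict_iff' h.mR]
  exact ae_of_ae_map h.mg.aemeasurable (h.acg.ae_le hp)

lemma key_sqrt [SigmaFinite μ] (h : EdgePair μ D R f g) :
    ∀ᵐ t ∂μ, t ∈ D → Real.sqrt (pushDeriv μ R g t).toReal *
      Real.sqrt (pushDeriv μ D f (f t)).toReal = 1 := by
  filter_upwards [h.key] with t ht hD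
  rw [← Real.sqrt_mul ENNReal.toReal_nonneg, ← ENNReal.toReal_mul, ht]
  simp [hD]

lemma off [SigmaFinite μ] (h : EdgePair μ D R f g) :
    ∀ᵐ t ∂μ, t ∉ D → pushDeriv μ R g t = 0 := by
  have h0 : ∫⁻ t, pushDeriv μ R g t * (Dᶜ).indicator 1 t ∂μ = 0 := by
    rw [h.swap.lint (measurable_one.indicator h.mD.compl).aemeasurable]
    rw [← lintegral_zero (μ := μ.restrict R)]
    refine lintegral_congr_ae ?_
    filter_upwards [ae_restrict_mem h.mR] with x hx
    have := h.tog hx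
    simp [this]
  have h0 := (lintegral_eq_zero_iff
    ((meas μ R g).mul (measurable_one.indicator h.mD.compl))).1 h0
  filter_upwards [h0] with t ht hD
  simpa [hD] using ht

/-- The candidate adjoint. -/
noncomputable def adj (μ : Measure X) (D R : Set X) (f g : X → X) (ψ : X → ℂ) : X → ℂ :=
  D.indicator fun t => (Real.sqrt ((pushDeriv μ R g t).toReal) : ℂ) * ψ (f t)

lemma adj_aesm (h : EdgePair μ D R f g) {ψ : X → ℂ}
    (hψ : AEStronglyMeasurable ψ μ) : AEStronglyMeasurable (adj μ D R f g ψ) μ := by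
  unfold adj
  rw [aestronglyMeasurable_indicator_iff h.mD]
  refine AEStronglyMeasurable.mul ?_ ?_
  · exact (Complex.measurable_ofReal.comp
      ((meas μ R g).ennreal_toReal.sqrt)).aestronglyMeasurable
  · exact (hψ.mono_ac h.acf).comp_measurable h.mf

lemma adj_memLp [SigmaFinite μ] (h : EdgePair μ D R f g) {ψ : X → ℂ}
    (hψ : MemLp ψ 2 μ) : MemLp (adj μ D R f g ψ) 2 μ := by
  wlog hm : StronglyMeasurable ψ generalizing ψ
  · have h1 := this (hψ.ae_eq hψ.1.ae_eq_mk) hψ.1.stronglyMeasurable_mk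
    refine h1.ae_eq ?_
    filter_upwards [h.swap.ae_pull hψ.1.ae_eq_mk] with t ht
    by_cases hD : t ∈ D
    · simp [adj, hD, ht hD]
    · simp [adj, hD]
  refine ⟨h.adj_aesm hψ.1, ?_⟩
  have h2 := hψ.2
  rw [eLpNorm_lt_top_iff_lintegral_rpow_enorm_lt_top (by simp) (by simp)] at h2 ⊢
  refine lt_of_le_of_lt ?_ h2
  calc ∫⁻ t, ‖adj μ D R f g ψ t‖ₑ ^ (2 : ℝ≥0∞).toReal ∂μ
      ≤ ∫⁻ t, pushDeriv μ R g t * ‖ψ (f t)‖ₑ ^ (2 : ℝ≥0∞).toReal ∂μ := by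
        refine lintegral_mono_ae ?_
        filter_upwards [h.swap.lt_top] with t ht
        by_cases hD : t ∈ D
        · simp only [adj, hD, indicator_of_mem, enorm_mul]
          rw [ENNReal.mul_rpow_of_nonneg _ _ (by simp)]
          gcongr
          rw [← ofReal_norm, Complex.norm_real, Real.norm_of_nonneg (Real.sqrt_nonneg _),
            ENNReal.ofReal_rpow_of_nonneg (Real.sqrt_nonneg _) (by simp)]
          simp [Real.sq_sqrt, ENNReal.ofReal_toReal ht.ne]
        · simp [adj, hD]
    _ = ∫⁻ x in R, ‖ψ (f (g x))‖ₑ ^ (2 : ℝ≥0∞).toReal ∂μ :=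
        h.swap.lint ((hm.measurable.comp h.mf).enorm.pow_const _).aemeasurable
    _ = ∫⁻ x in R, ‖ψ x‖ₑ ^ (2 : ℝ≥0∞).toReal ∂μ := by
        refine lintegral_congr_ae ?_
        filter_upwards [h.invR] with x hx
        rw [hx]
    _ ≤ _ := setLIntegral_le_lintegral _ _

lemma int [SigmaFinite μ] (h : EdgePair μ D R f g) {u : X → ℂ}
    (hu : AEStronglyMeasurable u ((μ.restrict R).map g)) :
    ∫ t, (pushDeriv μ R g t).toReal • u t ∂μ = ∫ x in R, u (g x) ∂μ := by
  have := h.swap.sigmaFinite_map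
  unfold pushDeriv
  rw [integral_rnDeriv_smul h.acg, integral_map h.mg.aemeasurable hu]

lemma aesm_comp (h : EdgePair μ D R f g) {ψ : X → ℂ} (hψ : AEStronglyMeasurable ψ μ) :
    AEStronglyMeasurable (fun t => ψ (f t)) ((μ.restrict R).map g) := by
  -- `f` pushes the measure `g_* (μ|R)` to `μ|R`
  refine AEStronglyMeasurable.comp_measurable (f := f) (g := ψ) ?_ h.mf
  rw [Measure.map_map h.mf h.mg]
  have : Measure.map (f ∘ g) (μ.restrict R) = μ.restrict R := by
    rw [Measure.map_congr (g := id) (by filter_upwards [h.invR] with x hx; exact hx),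
      Measure.map_id]
  rw [this]
  exact hψ.restrict

lemma inner_eq [SigmaFinite μ] (h : EdgePair μ D R f g) {φ ψ : X → ℂ}
    (hφ : AEStronglyMeasurable φ μ) (hψ : AEStronglyMeasurable ψ μ) :
    ∫ x, inner ℂ (Taction μ R D f g φ x) (ψ x) ∂μ =
      ∫ t, inner ℂ (φ t) (adj μ D R f g ψ t) ∂μ := by
  have hu : AEStronglyMeasurable (fun t => (Real.sqrt (pushDeriv μ D f (f t)).toReal : ℂ) *
      inner ℂ (φ t) (ψ (f t))) ((μ.restrict R).map g) := by
    refine AEStronglyMeasurable.mul ?_ ?_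
    · exact (Complex.measurable_ofReal.comp
        (((meas μ D f).comp h.mf).ennreal_toReal.sqrt)).aestronglyMeasurable
    · exact (hφ.mono_ac h.acg).inner (h.aesm_comp hψ)
  calc ∫ x, inner ℂ (Taction μ R D f g φ x) (ψ x) ∂μ
      = ∫ x, R.indicator (fun x => (Real.sqrt (pushDeriv μ D f x).toReal : ℂ) *
          inner ℂ (φ (g x)) (ψ x)) x ∂μ := by
        refine integral_congr_ae (Filter.Eventually.of_forall fun x => ?_)
        by_cases hx : x ∈ R
        · simp [Taction, hx]; ring
        · simp [Taction, hx]
    _ = ∫ x in R, (Real.sqrt (pushDeriv μ D f x).toReal : ℂ) * inner ℂ (φ (g x)) (ψ x) ∂μ :=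
        integral_indicator h.mR
    _ = ∫ x in R, (Real.sqrt (pushDeriv μ D f (f (g x))).toReal : ℂ) *
          inner ℂ (φ (g x)) (ψ (f (g x))) ∂μ := by
        refine integral_congr_ae ?_
        filter_upwards [h.invR] with x hx
        rw [hx]
    _ = ∫ t, (pushDeriv μ R g t).toReal • ((Real.sqrt (pushDeriv μ D f (f t)).toReal : ℂ) *
          inner ℂ (φ t) (ψ (f t))) ∂μ := (h.int hu).symm
    _ = ∫ t, inner ℂ (φ t) (adj μ D R f g ψ t) ∂μ := by
        refine integral_congr_ae ?_
        filter_upwards [h.key_sqrt, h.off] with t ht hoff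
        by_cases hD : t ∈ D
        · have h1 := ht hD
          set a := Real.sqrt (pushDeriv μ R g t).toReal with ha
          have h2 : (pushDeriv μ R g t).toReal = a * a :=
            (Real.mul_self_sqrt ENNReal.toReal_nonneg).symm
          have h3 : (a : ℂ) * (Real.sqrt (pushDeriv μ D f (f t)).toReal : ℂ) = 1 := by
            exact_mod_cast h1
          simp only [adj, hD, indicator_of_mem, ← ha, RCLike.inner_apply, Complex.real_smul]
          rw [h2, Complex.ofReal_mul]
          linear_combination ((a : ℂ) * (ψ (f t) * (starRingEnd ℂ) (φ t))) * h3
        · simp [adj, hD, hoff hD]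

end EdgePair

lemma RelBranchingSystem.edgePair [MeasurableSpace X] {μ : Measure X}
    {r s : E1 → V0} {V : Set V0} {R : E1 → Set X} {D : V0 → Set X} {f finv : E1 → X → X}
    (h : RelBranchingSystem r s V μ R D f finv) (e : E1) :
    EdgePair μ (D (r e)) (R e) (f e) (finv e) :=
  ⟨h.measD _, h.measR _, h.measf _, h.measfinv _, h.mapsf _, h.mapsfinv _, h.inv_right _,
    h.inv_left _, h.ac_f _, h.ac_finv _⟩

/-- For every edge `e`, the adjoint of the operator `T_e` (the bounded
operator with `T_e φ = Φ_{f_e⁻¹}^{1/2}·(φ ∘ f_e⁻¹)` on `R e` and `0` elsewhere) acts by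
`T_e* ψ =ᵐ χ_{D (r e)} · Φ_{f_e}^{1/2} · (ψ ∘ f_e)`.  Moreover `T_e T_e*` is multiplication
by the indicator of `R e`; consequently `T_e T_e* T_e = T_e` (so `T_e` is a partial
isometry) and `M_{χ_{D (s e)}} ∘ (T_e T_e*) = T_e T_e*`, i.e. `T_e T_e* ≤ M_{χ_{D (s e)}}`. -/
theorem statement1 [MeasurableSpace X] {μ : Measure X} [SigmaFinite μ]
    (r s : E1 → V0) [Fintype V0] [Fintype E1] (V : Set V0)
    (R : E1 → Set X) (D : V0 → Set X) (f finv : E1 → X → X)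
    (hbs : RelBranchingSystem r s V μ R D f finv) (e : E1)
    (T : Lp ℂ 2 μ →L[ℂ] Lp ℂ 2 μ)
    (hT : ∀ φ : Lp ℂ 2 μ, ⇑(T φ) =ᵐ[μ] Taction μ (R e) (D (r e)) (f e) (finv e) ⇑φ) :
    (∀ ψ : Lp ℂ 2 μ, ⇑((ContinuousLinearMap.adjoint T) ψ) =ᵐ[μ]
      (D (r e)).indicator fun t =>
        (Real.sqrt ((pushDeriv μ (R e) (finv e) t).toReal) : ℂ) * (ψ : X → ℂ) (f e t)) ∧
    (∀ φ : Lp ℂ 2 μ, ⇑((T ∘L ContinuousLinearMap.adjoint T) φ) =ᵐ[μ]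
      (R e).indicator fun x => (φ : X → ℂ) x) ∧
    (T ∘L ContinuousLinearMap.adjoint T ∘L T = T) ∧
    (∀ φ : Lp ℂ 2 μ, ⇑((T ∘L ContinuousLinearMap.adjoint T) φ) =ᵐ[μ]
      (D (s e)).indicator fun x => ((T ∘L ContinuousLinearMap.adjoint T) φ : X → ℂ) x) := by
  have h := hbs.edgePair e
  have hadj : ∀ ψ : Lp ℂ 2 μ, ⇑((ContinuousLinearMap.adjoint T) ψ) =ᵐ[μ]
      EdgePair.adj μ (D (r e)) (R e) (f e) (finv e) ψ := by
    intro ψ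
    have hm := h.adj_memLp (Lp.memLp ψ)
    have : (ContinuousLinearMap.adjoint T) ψ = hm.toLp _ := by
      refine ext_inner_left ℂ fun φ => ?_
      rw [ContinuousLinearMap.adjoint_inner_right, L2.inner_def, L2.inner_def]
      calc _ = ∫ x, inner ℂ (Taction μ (R e) (D (r e)) (f e) (finv e) φ x) (ψ x) ∂μ := by
            refine integral_congr_ae ?_
            filter_upwards [hT φ] with x hx
            rw [hx]
        _ = _ := h.inner_eq (Lp.aestronglyMeasurable φ) (Lp.aestronglyMeasurable ψ)
        _ = _ := by
            refine integral_congr_ae ?_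
            filter_upwards [hm.coeFn_toLp] with x hx
            rw [hx]
    rw [this]
    exact hm.coeFn_toLp
  have hTT : ∀ φ : Lp ℂ 2 μ, ⇑((T ∘L ContinuousLinearMap.adjoint T) φ) =ᵐ[μ]
      (R e).indicator fun x => (φ : X → ℂ) x := by
    intro φ
    have hinv := (ae_restrict_iff' (hbs.measR e)).1 (hbs.inv_right e)
    filter_upwards [hT (ContinuousLinearMap.adjoint T φ), h.ae_pull (hadj φ), hinv,
      h.swap.key_sqrt] with x h1 h2 h3 h4
    rw [ContinuousLinearMap.comp_apply, h1]
    by_cases hx : x ∈ R e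
    · have h5 := hbs.mapsfinv e hx
      have h6 : (Real.sqrt (pushDeriv μ (D (r e)) (f e) x).toReal : ℂ) *
          (Real.sqrt (pushDeriv μ (R e) (finv e) (finv e x)).toReal : ℂ) = 1 := by
        exact_mod_cast h4 hx
      simp only [Taction, hx, indicator_of_mem, h2 hx, EdgePair.adj, h5, h3 hx]
      rw [← mul_assoc, h6, one_mul]
    · simp [Taction, hx]
  refine ⟨hadj, hTT, ?_, ?_⟩
  · refine ContinuousLinearMap.ext fun φ => Lp.ext ?_
    filter_upwards [hTT (T φ), hT φ] with x h1 h2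
    refine Eq.trans h1 ?_
    by_cases hx : x ∈ R e
    · simp [hx]
    · simp [hx, h2, Taction]
  · intro φ
    have h0 : ∀ᵐ x ∂μ, x ∉ R e \ D (s e) := measure_eq_zero_iff_ae_notMem.1 (hbs.RsubD e)
    filter_upwards [hTT φ, h0] with x h1 h2
    by_cases hx : x ∈ D (s e)
    · simp [hx]
    · have hR : x ∉ R e := fun hR => h2 ⟨hR, hx⟩
      rw [h1]
      simp [hx, hR]


end
end

section
/- The multiplication operators P_v := M_{χ_{D_v}} on L²(X,μ), for v ∈ G⁰, are self-adjoint idempotents satisfying P_u ∘ P_v = 0 whenever u ≠ v; and for every v ∈ V with s⁻¹(v) ≠ ∅ one has the Cuntz–Krieger relation P_v = Σ_{e ∈ s⁻¹(v)} T_e T_e*, where T_e is the bounded operator with T_e φ = Φ_{f_e⁻¹}^{1/2}·(φ∘f_e⁻¹) on R_e and 0 elsewhere. -/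
open MeasureTheory Set
open scoped ENNReal NNReal

section

variable {V0 E1 X : Type*}

theorem rnDeriv_lt_top_aux [MeasurableSpace X] {μ : Measure X} [SigmaFinite μ]
    (D : Set X) (f finv : X → X)
    (hD : MeasurableSet D) (hf : Measurable f) (hfi : Measurable finv)
    (hl : ∀ᵐ t ∂μ.restrict D, finv (f t) = t) :
    ∀ᵐ x ∂μ, pushDeriv μ D f x < ∞ := by
  have h : ∀ᵐ x ∂μ.restrict (⋃ n, finv ⁻¹' (spanningSets μ n)), pushDeriv μ D f x < ∞ := by
    rw [ae_restrict_iUnion_iff]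
    intro n
    have hm : MeasurableSet (finv ⁻¹' (spanningSets μ n)) := hfi (measurableSet_spanningSets μ n)
    refine ae_lt_top (Measure.measurable_rnDeriv _ _) (ne_of_lt ?_)
    refine (Measure.setLIntegral_rnDeriv_le _).trans_lt ?_
    rw [Measure.map_apply hf hm]
    have : (μ.restrict D) (f ⁻¹' (finv ⁻¹' (spanningSets μ n)))
        = (μ.restrict D) (spanningSets μ n) := by
      apply measure_congr
      filter_upwards [hl] with t ht
      apply propext
      change finv (f t) ∈ spanningSets μ n ↔ t ∈ spanningSets μ n
      rw [ht]
    rw [this]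
    exact (Measure.restrict_apply_le _ _).trans_lt (measure_spanningSets_lt_top μ n)
  rwa [← preimage_iUnion, iUnion_spanningSets, preimage_univ, Measure.restrict_univ] at h

theorem edge_aux [MeasurableSpace X] {μ : Measure X} [SigmaFinite μ]
    (R D : Set X) (f finv : X → X)
    (hR : MeasurableSet R) (hD : MeasurableSet D) (hf : Measurable f) (hfi : Measurable finv)
    (mf : MapsTo f D R) (mfi : MapsTo finv R D)
    (hr : ∀ᵐ x ∂μ.restrict R, f (finv x) = x)
    (hl : ∀ᵐ t ∂μ.restrict D, finv (f t) = t)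
    (acf : (μ.restrict D).map f ≪ μ) (acfi : (μ.restrict R).map finv ≪ μ)
    (T : Lp ℂ 2 μ →L[ℂ] Lp ℂ 2 μ)
    (hT : ∀ φ : Lp ℂ 2 μ, ⇑(T φ) =ᵐ[μ] Taction μ R D f finv ⇑φ) (ψ : Lp ℂ 2 μ) :
    ⇑(T (ContinuousLinearMap.adjoint T ψ)) =ᵐ[μ] R.indicator fun x => (ψ : X → ℂ) x := by
  have hfin := rnDeriv_lt_top_aux D f finv hD hf hfi hl
  have hΦm : Measurable (pushDeriv μ D f) := Measure.measurable_rnDeriv _ _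
  have hν : μ.withDensity (pushDeriv μ D f) = (μ.restrict D).map f :=
    Measure.withDensity_rnDeriv_eq _ _ acf
  have hψm : Measurable (ψ : X → ℂ) := (Lp.stronglyMeasurable ψ).measurable
  set Φ := pushDeriv μ D f with hΦ
  set w : X → ℝ := fun x => Real.sqrt (Φ x).toReal with hw
  have hwm : Measurable w := hΦm.ennreal_toReal.sqrt
  have hw2 : ∀ x, (Φ x).toReal = w x * w x := fun x =>
    (Real.mul_self_sqrt ENNReal.toReal_nonneg).symm
  let k : X → ℂ := fun x => ((w x : ℂ))⁻¹ * ψ x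
  have hkm : Measurable k := by
    have : Measurable fun x => (w x : ℂ) := Complex.measurable_ofReal.comp hwm
    exact this.inv.mul hψm
  -- the candidate for the adjoint
  have hmem : MemLp (D.indicator (k ∘ f)) 2 μ := by
    rw [memLp_indicator_iff_restrict hD]
    rw [← memLp_map_measure_iff hkm.aestronglyMeasurable hf.aemeasurable, ← hν]
    rw [memLp_two_iff_integrable_sq_norm hkm.aestronglyMeasurable,
      integrable_withDensity_iff hΦm hfin]
    have hψ2 := (memLp_two_iff_integrable_sq_norm hψm.aestronglyMeasurable).1 (Lp.memLp ψ)
    refine hψ2.mono ((hkm.norm.pow_const 2).mul hΦm.ennreal_toReal).aestronglyMeasurable ?_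
    refine Filter.Eventually.of_forall fun x => ?_
    rw [hw2 x]
    simp only [k, norm_mul, norm_inv, Complex.norm_real, norm_pow, norm_norm]
    by_cases h0 : w x = 0
    · simp [h0]
    · have : ‖w x‖ ≠ 0 := by simpa using h0
      apply le_of_eq
      field_simp
  set S : Lp ℂ 2 μ := hmem.toLp _ with hS
  have hSc : ⇑S =ᵐ[μ] D.indicator (k ∘ f) := hmem.coeFn_toLp
  have hadj : ContinuousLinearMap.adjoint T ψ = S := by
    refine ext_inner_left ℂ fun φ => ?_
    rw [ContinuousLinearMap.adjoint_inner_right, L2.inner_def, L2.inner_def]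
    have hφm : Measurable (φ : X → ℂ) := (Lp.stronglyMeasurable φ).measurable
    let q : X → ℂ := R.indicator fun x => inner ℂ ((φ : X → ℂ) (finv x)) (k x)
    have hqm : Measurable q :=
      (Measurable.inner (hφm.comp hfi) hkm).indicator hR
    have e1 : ∫ x, inner ℂ ((φ : X → ℂ) x) ((S : X → ℂ) x) ∂μ = ∫ x in D, q (f x) ∂μ := by
      rw [← integral_indicator hD]
      apply integral_congr_ae
      filter_upwards [hSc, (ae_restrict_iff' hD).1 hl] with x hx hx'
      rw [hx]
      by_cases hxD : x ∈ D
      · simp [hxD, q, mf hxD, hx' hxD]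
      · simp [hxD]
    have e2 : ∫ x in D, q (f x) ∂μ = ∫ x, (Φ x).toReal • q x ∂μ := by
      rw [← integral_map hf.aemeasurable hqm.aestronglyMeasurable, ← hν,
        integral_withDensity_eq_integral_toReal_smul hΦm hfin]
    rw [e1, e2]
    apply integral_congr_ae
    filter_upwards [hT φ] with x hx
    rw [hx]
    by_cases hxR : x ∈ R
    · simp only [Taction, ← hΦ, hxR, indicator_of_mem, q, hw2 x, k]
      have : Real.sqrt (w x * w x) = w x := by
        rw [← hw2 x]
      rw [this]
      simp only [RCLike.inner_apply, map_mul, Complex.conj_ofReal, Complex.real_smul,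
        Complex.ofReal_mul]
      by_cases h0 : w x = 0
      · simp [h0]
      · have : (w x : ℂ) ≠ 0 := by exact_mod_cast h0
        field_simp
    · simp [Taction, hxR, q]
  rw [hadj]
  -- positivity of the density on `R`
  have hpos : ∀ᵐ x ∂μ, x ∈ R → Φ x ≠ 0 := by
    have hNm : MeasurableSet {x | Φ x = 0} := hΦm (measurableSet_singleton 0)
    have h1 : (μ.restrict D).map f {x | Φ x = 0} = 0 := by
      rw [← hν, withDensity_apply _ hNm, setLIntegral_congr_fun hNm (g := fun _ => 0)]
      · simp
      · intro x hx
        exact hx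
    have h2 : ∀ᵐ t ∂μ, t ∈ D → Φ (f t) ≠ 0 := by
      rw [← ae_restrict_iff' hD]
      rw [Measure.map_apply hf hNm] at h1
      rw [ae_iff]
      simpa using h1
    have h3 := (ae_restrict_iff' hR).1 (ae_of_ae_map hfi.aemeasurable (acfi.ae_le h2))
    filter_upwards [h3, (ae_restrict_iff' hR).1 hr] with x hx hx' hxR
    have := hx hxR (mfi hxR)
    rwa [hx' hxR] at this
  have h4 := (ae_restrict_iff' hR).1 (ae_of_ae_map hfi.aemeasurable (acfi.ae_le hSc))
  filter_upwards [hT S, hpos, h4, (ae_restrict_iff' hR).1 hr, hfin] with x h1 h2 h3 h5 h6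
  rw [h1]
  by_cases hxR : x ∈ R
  · simp only [Taction, ← hΦ, hxR, indicator_of_mem]
    rw [h3 hxR, indicator_of_mem (mfi hxR)]
    simp only [Function.comp, h5 hxR, k]
    have h0 : w x ≠ 0 := by
      have := ENNReal.toReal_pos (h2 hxR) h6.ne
      exact (Real.sqrt_pos.2 this).ne'
    have : (w x : ℂ) ≠ 0 := by exact_mod_cast h0
    change (w x : ℂ) * _ = _
    field_simp
  · simp [Taction, hxR]

/-- The multiplication operators `P v = M_{χ_{D v}}` on `L²(X,μ)` are
self-adjoint idempotents satisfying `P u ∘ P v = 0` for `u ≠ v`, and for every `v ∈ V`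
emitting at least one edge one has the Cuntz–Krieger relation
`P v = Σ_{e : s e = v} T_e T_e*`. -/
theorem statement3 [MeasurableSpace X] {μ : Measure X} [SigmaFinite μ]
    (r s : E1 → V0) [Fintype V0] [Fintype E1] [DecidableEq V0] (V : Set V0)
    (R : E1 → Set X) (D : V0 → Set X) (f finv : E1 → X → X)
    (hbs : RelBranchingSystem r s V μ R D f finv)
    (T : E1 → (Lp ℂ 2 μ →L[ℂ] Lp ℂ 2 μ))
    (hT : ∀ e, ∀ φ : Lp ℂ 2 μ, ⇑(T e φ) =ᵐ[μ] Taction μ (R e) (D (r e)) (f e) (finv e) ⇑φ)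
    (P : V0 → (Lp ℂ 2 μ →L[ℂ] Lp ℂ 2 μ))
    (hP : ∀ v, ∀ φ : Lp ℂ 2 μ, ⇑(P v φ) =ᵐ[μ] (D v).indicator fun x => (φ : X → ℂ) x) :
    (∀ v, ContinuousLinearMap.adjoint (P v) = P v) ∧
    (∀ v, P v ∘L P v = P v) ∧
    (∀ u v, u ≠ v → P u ∘L P v = 0) ∧
    (∀ v ∈ V, (∃ e, s e = v) →
      P v = ∑ e ∈ Finset.univ.filter (fun e => s e = v),
        T e ∘L ContinuousLinearMap.adjoint (T e)) := by
  refine ⟨fun v => ?_, fun v => ?_, fun u v huv => ?_, fun v hv hex => ?_⟩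
  · symm
    rw [ContinuousLinearMap.eq_adjoint_iff]
    intro φ ψ
    rw [L2.inner_def, L2.inner_def]
    apply integral_congr_ae
    filter_upwards [hP v φ, hP v ψ] with x h1 h2
    rw [h1, h2]
    by_cases hx : x ∈ D v <;> simp [hx]
  · ext1 φ
    apply Lp.ext
    rw [ContinuousLinearMap.comp_apply]
    filter_upwards [hP v φ, hP v (P v φ)] with x h1 h2
    rw [h2]
    by_cases hx : x ∈ D v <;> simp [hx, h1]
  · ext1 φ
    apply Lp.ext
    rw [ContinuousLinearMap.comp_apply, ContinuousLinearMap.zero_apply]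
    have h0 : ∀ᵐ x ∂μ, x ∉ D u ∩ D v := measure_eq_zero_iff_ae_notMem.1 (hbs.disjD u v huv)
    filter_upwards [hP v φ, hP u (P v φ), h0, Lp.coeFn_zero ℂ 2 μ] with x h1 h2 h3 h4
    rw [h2, h4]
    by_cases hx : x ∈ D u
    · have hx' : x ∉ D v := fun h => h3 ⟨hx, h⟩
      simp [hx, h1, hx']
    · simp [hx]
  · ext1 φ
    apply Lp.ext
    rw [ContinuousLinearMap.sum_apply]
    have hc := measure_eq_zero_iff_ae_notMem.1 (hbs.CK v hv hex)
    have hd : ∀ᵐ x ∂μ, ∀ e e', e ≠ e' → x ∉ R e ∩ R e' := by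
      rw [ae_all_iff]; intro e
      rw [ae_all_iff]; intro e'
      by_cases h : e = e'
      · simp [h]
      · filter_upwards [measure_eq_zero_iff_ae_notMem.1 (hbs.disjR e e' h)] with x hx _
        exact hx
    have hTT : ∀ᵐ x ∂μ, ∀ e, (T e (ContinuousLinearMap.adjoint (T e) φ) : X → ℂ) x
        = (R e).indicator (fun x => (φ : X → ℂ) x) x := by
      rw [ae_all_iff]; intro e
      exact edge_aux (R e) (D (r e)) (f e) (finv e) (hbs.measR e) (hbs.measD _) (hbs.measf e)
        (hbs.measfinv e) (hbs.mapsf e) (hbs.mapsfinv e) (hbs.inv_right e) (hbs.inv_left e)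
        (hbs.ac_f e) (hbs.ac_finv e) (T e) (hT e) φ
    have hsum := Lp.coeFn_finsetSum (Finset.univ.filter (fun e => s e = v))
      (fun e => (T e ∘L ContinuousLinearMap.adjoint (T e)) φ)
    filter_upwards [hP v φ, hc, hd, hTT, hsum] with x h1 h2 h3 h4 h5
    rw [h1, h5]
    simp only [Finset.sum_apply, ContinuousLinearMap.comp_apply, h4]
    have h6 : x ∈ D v ↔ ∃ e, s e = v ∧ x ∈ R e := by
      rw [mem_symmDiff] at h2
      simp only [mem_iUnion, exists_prop] at h2
      constructor
      · intro h
        by_contra h'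
        exact h2 (Or.inl ⟨h, h'⟩)
      · intro h
        by_contra h'
        exact h2 (Or.inr ⟨h, h'⟩)
    by_cases hx : x ∈ D v
    · obtain ⟨e, he, hxe⟩ := h6.1 hx
      rw [Finset.sum_eq_single e]
      · simp [hx, hxe]
      · intro e' _ hne
        have : x ∉ R e' := fun h => h3 e' e hne ⟨h, hxe⟩
        simp [this]
      · intro h
        simp [he] at h
    · rw [Finset.sum_eq_zero]
      · simp [hx]
      · intro e he
        have : x ∉ R e := fun h => hx (h6.2 ⟨e, by simpa using he, h⟩)
        simp [this]

end
end

section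
/- The family {Q_e, B_v} together with the maps g_e is a branching system for the extended graph E(G), with the Cuntz–Krieger condition at every vertex. Explicitly: (1) μ(Q_e ∩ Q_f) = 0 for distinct edges e, f of E(G); (2) μ(B_u ∩ B_w) = 0 for distinct vertices u, w of E(G); (3) μ(Q_e \ B_{s_E(e)}) = 0 for every edge e of E(G); (4) for every vertex w of E(G) with at least one outgoing edge, B_w coincides with ⋃_{e ∈ s_E⁻¹(w)} Q_e up to a μ-null set (in particular, for r(e) = v ∉ V, R_e coincides up to a μ-null set with the disjoint-up-to-null-sets union Q_e ∪ Q_{e'}); (5) for every edge e of E(G), the restriction of f_{ē} (where ē ∈ G¹ is the underlying unprimed edge) gives maps B_{r_E(e)} → Q_e and Q_e → B_{r_E(e)} that are mutually inverse μ-a.e. and whose pushforward measures of μ restricted to these sets are absolutely continuous with respect to μ. -/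
open MeasureTheory Set
open scoped ENNReal NNReal

section

variable {V0 E1 X : Type*}

/-- The source map of the extended graph `E(G)` of `(G, V)`: vertices are
`V0 ⊕ {v // v ∉ V}` (the second summand being the added vertices `v'`), edges are
`E1 ⊕ {e // r e ∉ V}` (the second summand being the added edges `e'`). -/
def sExt (r s : E1 → V0) (V : Set V0) : (E1 ⊕ {e : E1 // r e ∉ V}) → (V0 ⊕ {v : V0 // v ∉ V})
  | Sum.inl e => Sum.inl (s e)
  | Sum.inr ⟨e, _⟩ => Sum.inl (s e)

/-- The range map of the extended graph `E(G)`: `r_E e = r e` and `r_E e' = (r e)'`. -/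
def rExt (r : E1 → V0) (V : Set V0) : (E1 ⊕ {e : E1 // r e ∉ V}) → (V0 ⊕ {v : V0 // v ∉ V})
  | Sum.inl e => Sum.inl (r e)
  | Sum.inr ⟨e, h⟩ => Sum.inr ⟨r e, h⟩

/-- The underlying (unprimed) edge of `G` below an edge of the extended graph `E(G)`. -/
def baseEdge (r : E1 → V0) (V : Set V0) : (E1 ⊕ {e : E1 // r e ∉ V}) → E1
  | Sum.inl e => e
  | Sum.inr ⟨e, _⟩ => e

open scoped Classical in
/-- The sets `B_w`, `w` a vertex of the extended graph: `B v = D v` for `v ∈ V`,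
`B v = ⋃_{s e = v} R e` for `v ∉ V` and `B v' = D v \ ⋃_{s e = v} R e`. -/
noncomputable def Bext [MeasurableSpace X] (s : E1 → V0) (V : Set V0)
    (R : E1 → Set X) (D : V0 → Set X) : (V0 ⊕ {v : V0 // v ∉ V}) → Set X
  | Sum.inl v => if v ∈ V then D v else ⋃ e ∈ {e' | s e' = v}, R e
  | Sum.inr ⟨v, _⟩ => D v \ ⋃ e ∈ {e' | s e' = v}, R e

open scoped Classical in
/-- The sets `Q_ε`, `ε` an edge of the extended graph: `Q e = R e` if `r e ∈ V`, and for
`r e = v ∉ V`, `Q e = (f_e⁻¹)⁻¹ (B v)` and `Q e' = (f_e⁻¹)⁻¹ (B v')` (preimages under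
`f_e⁻¹`, whose domain is `R e`). -/
noncomputable def Qext [MeasurableSpace X] (r s : E1 → V0) (V : Set V0)
    (R : E1 → Set X) (D : V0 → Set X) (finv : E1 → X → X) :
    (E1 ⊕ {e : E1 // r e ∉ V}) → Set X
  | Sum.inl e => if r e ∈ V then R e
      else R e ∩ finv e ⁻¹' (Bext s V R D (Sum.inl (r e)))
  | Sum.inr ⟨e, h⟩ => R e ∩ finv e ⁻¹' (Bext s V R D (Sum.inr ⟨r e, h⟩))

lemma aux_iUnion_sub [MeasurableSpace X] {μ : Measure X}
    {r s : E1 → V0} [Fintype E1] {V : Set V0}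
    {R : E1 → Set X} {D : V0 → Set X} {f finv : E1 → X → X}
    (hbs : RelBranchingSystem r s V μ R D f finv) :
    ∀ᵐ x ∂μ, ∀ e, x ∈ R e → x ∈ D (s e) := by
  rw [ae_all_iff]
  intro e
  rw [ae_iff]
  convert hbs.RsubD e using 2
  ext x
  simp

lemma aux_B_sub [MeasurableSpace X] {μ : Measure X}
    {r s : E1 → V0} [Fintype E1] {V : Set V0}
    {R : E1 → Set X} {D : V0 → Set X} {f finv : E1 → X → X}
    (hbs : RelBranchingSystem r s V μ R D f finv) :
    ∀ᵐ x ∂μ, ∀ w, x ∈ Bext s V R D w → x ∈ D (Sum.elim id Subtype.val w) := by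
  filter_upwards [aux_iUnion_sub hbs] with x hx w hw
  rcases w with v | ⟨v, hv⟩
  · by_cases h : v ∈ V
    · simpa [Bext, h] using hw
    · simp only [Bext, h, if_false, mem_iUnion, mem_setOf_eq] at hw
      obtain ⟨e, he, hxe⟩ := hw
      subst he
      exact hx e hxe
  · exact hw.1

lemma aux_B_meas [MeasurableSpace X] {μ : Measure X}
    {r s : E1 → V0} [Fintype E1] {V : Set V0}
    {R : E1 → Set X} {D : V0 → Set X} {f finv : E1 → X → X}
    (hbs : RelBranchingSystem r s V μ R D f finv) (w) :
    MeasurableSet (Bext s V R D w) := by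
  have hU : ∀ v, MeasurableSet (⋃ e ∈ {e' | s e' = v}, R e) := fun v =>
    MeasurableSet.biUnion (Set.to_countable _) fun e _ => hbs.measR e
  rcases w with v | ⟨v, hv⟩
  · simp only [Bext]
    split_ifs
    · exact hbs.measD v
    · exact hU v
  · exact (hbs.measD v).diff (hU v)

/-- Uniform description of the sets `Q`. -/
lemma aux_Q_eq [MeasurableSpace X] {μ : Measure X}
    {r s : E1 → V0} {V : Set V0}
    {R : E1 → Set X} {D : V0 → Set X} {f finv : E1 → X → X}
    (hbs : RelBranchingSystem r s V μ R D f finv) (ε) :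
    Qext r s V R D finv ε =
      R (baseEdge r V ε) ∩ finv (baseEdge r V ε) ⁻¹' (Bext s V R D (rExt r V ε)) := by
  rcases ε with e | ⟨e, he⟩
  · by_cases h : r e ∈ V
    · ext x
      simp only [Qext, baseEdge, rExt, Bext, h, if_true, mem_inter_iff, mem_preimage]
      exact ⟨fun hx => ⟨hx, hbs.mapsfinv e hx⟩, fun hx => hx.1⟩
    · simp only [Qext, baseEdge, rExt, h, if_false]
  · rfl

/-- `R e` is exactly `Q_e ∪ Q_{e'}`. -/
lemma aux_R_eq [MeasurableSpace X] {μ : Measure X}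
    {r s : E1 → V0} {V : Set V0}
    {R : E1 → Set X} {D : V0 → Set X} {f finv : E1 → X → X}
    (hbs : RelBranchingSystem r s V μ R D f finv) (e) (h : r e ∉ V) :
    Qext r s V R D finv (Sum.inl e) ∪ Qext r s V R D finv (Sum.inr ⟨e, h⟩) = R e := by
  ext x
  simp only [Qext, h, if_false, Bext, mem_union, mem_inter_iff, mem_preimage, mem_diff]
  have := @hbs.mapsfinv e x
  tauto

lemma aux_UQ_eq [MeasurableSpace X] {μ : Measure X}
    {r s : E1 → V0} {V : Set V0}
    {R : E1 → Set X} {D : V0 → Set X} {f finv : E1 → X → X}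
    (hbs : RelBranchingSystem r s V μ R D f finv) (v) :
    (⋃ ε ∈ {ε' | sExt r s V ε' = Sum.inl v}, Qext r s V R D finv ε) =
      ⋃ e ∈ {e' | s e' = v}, R e := by
  ext x
  simp only [mem_iUnion, mem_setOf_eq, exists_prop]
  constructor
  · rintro ⟨ε, hε, hx⟩
    rw [aux_Q_eq hbs] at hx
    refine ⟨baseEdge r V ε, ?_, hx.1⟩
    rcases ε with e | ⟨e, he⟩ <;> exact Sum.inl.inj hε
  · rintro ⟨e, rfl, hx⟩
    by_cases h : r e ∈ V
    · exact ⟨Sum.inl e, rfl, by simpa [Qext, h] using hx⟩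
    · rw [← aux_R_eq hbs e h] at hx
      rcases hx with hx | hx
      · exact ⟨Sum.inl e, rfl, hx⟩
      · exact ⟨Sum.inr ⟨e, h⟩, rfl, hx⟩

lemma aux_B_disj [MeasurableSpace X] {μ : Measure X}
    {r s : E1 → V0} [Fintype E1] {V : Set V0}
    {R : E1 → Set X} {D : V0 → Set X} {f finv : E1 → X → X}
    (hbs : RelBranchingSystem r s V μ R D f finv) (w w') (hw : w ≠ w') :
    μ (Bext s V R D w ∩ Bext s V R D w') = 0 := by
  by_cases h : Sum.elim id Subtype.val w = Sum.elim id Subtype.val w'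
  · have : Bext s V R D w ∩ Bext s V R D w' = ∅ := by
      ext x
      rcases w with v | ⟨v, hv⟩ <;> rcases w' with v' | ⟨v', hv'⟩ <;>
        simp only [Sum.elim_inl, Sum.elim_inr, id] at h <;> subst h
      · exact absurd rfl hw
      · simp only [Bext, hv', if_false, mem_inter_iff, mem_diff, mem_empty_iff_false]
        tauto
      · simp only [Bext, hv, if_false, mem_inter_iff, mem_diff, mem_empty_iff_false]
        tauto
      · exact absurd rfl hw
    rw [this, measure_empty]
  · refine measure_mono_null_ae ?_ (hbs.disjD _ _ h)
    filter_upwards [aux_B_sub hbs] with x hx hxx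
    exact ⟨hx _ hxx.1, hx _ hxx.2⟩

/-- The family `{Q_ε, B_w}` together with the maps `g_ε = f_{ē}` is a
branching system for the extended graph `E(G)`, with the Cuntz–Krieger condition at every
vertex:  (1) the `Q_ε` are pairwise a.e. disjoint;  (2) the `B_w` are pairwise a.e.
disjoint;  (3) `Q_ε ⊆ B_{s_E ε}` up to a null set;  (4) for every vertex `w` emitting at
least one edge, `B_w = ⋃_{s_E ε = w} Q_ε` up to a null set (in particular, for
`r e ∉ V`, `R e` coincides up to a null set with `Q_e ∪ Q_{e'}`);  (5) for every edge
`ε`, the restriction of `f_{ē}` gives maps `B_{r_E ε} → Q_ε` and `Q_ε → B_{r_E ε}` that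
are mutually inverse `μ`-a.e. and whose pushforward measures are absolutely continuous
with respect to `μ`. -/
theorem statement5 [MeasurableSpace X] {μ : Measure X} [SigmaFinite μ]
    (r s : E1 → V0) [Fintype V0] [Fintype E1] (V : Set V0)
    (R : E1 → Set X) (D : V0 → Set X) (f finv : E1 → X → X)
    (hbs : RelBranchingSystem r s V μ R D f finv) :
    (∀ ε ε', ε ≠ ε' →
      μ (Qext r s V R D finv ε ∩ Qext r s V R D finv ε') = 0) ∧
    (∀ w w', w ≠ w' → μ (Bext s V R D w ∩ Bext s V R D w') = 0) ∧
    (∀ ε, μ (Qext r s V R D finv ε \ Bext s V R D (sExt r s V ε)) = 0) ∧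
    (∀ w, (∃ ε, sExt r s V ε = w) →
      μ (symmDiff (Bext s V R D w)
        (⋃ ε ∈ {ε' | sExt r s V ε' = w}, Qext r s V R D finv ε)) = 0) ∧
    (∀ e, ∀ h : r e ∉ V,
      μ (symmDiff (R e)
        (Qext r s V R D finv (Sum.inl e) ∪ Qext r s V R D finv (Sum.inr ⟨e, h⟩))) = 0) ∧
    (∀ ε,
      (∀ᵐ t ∂μ.restrict (Bext s V R D (rExt r V ε)),
        f (baseEdge r V ε) t ∈ Qext r s V R D finv ε) ∧
      (∀ᵐ x ∂μ.restrict (Qext r s V R D finv ε),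
        finv (baseEdge r V ε) x ∈ Bext s V R D (rExt r V ε)) ∧
      (∀ᵐ x ∂μ.restrict (Qext r s V R D finv ε),
        f (baseEdge r V ε) (finv (baseEdge r V ε) x) = x) ∧
      (∀ᵐ t ∂μ.restrict (Bext s V R D (rExt r V ε)),
        finv (baseEdge r V ε) (f (baseEdge r V ε) t) = t) ∧
      ((μ.restrict (Bext s V R D (rExt r V ε))).map (f (baseEdge r V ε)) ≪ μ) ∧
      ((μ.restrict (Qext r s V R D finv ε)).map (finv (baseEdge r V ε)) ≪ μ)) := by
  have hQ := aux_Q_eq hbs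
  have hBm := aux_B_meas hbs
  have hQm : ∀ ε, MeasurableSet (Qext r s V R D finv ε) := fun ε => by
    rw [hQ]
    exact (hbs.measR _).inter (hbs.measfinv _ (hBm _))
  have hQR : ∀ ε, Qext r s V R D finv ε ⊆ R (baseEdge r V ε) := fun ε => by
    rw [hQ]
    exact inter_subset_left
  have hrv : ∀ ε, Sum.elim id Subtype.val (rExt r V ε) = r (baseEdge r V ε) := by
    rintro (e | ⟨e, he⟩) <;> rfl
  have hBD : ∀ ε, Bext s V R D (rExt r V ε) ≤ᵐ[μ] D (r (baseEdge r V ε)) := fun ε => by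
    filter_upwards [aux_B_sub hbs] with x hx hxx
    rw [← hrv]
    exact hx _ hxx
  refine ⟨?_, aux_B_disj hbs, ?_, ?_, ?_, ?_⟩
  · intro ε ε' hne
    by_cases h : baseEdge r V ε = baseEdge r V ε'
    · have : Qext r s V R D finv ε ∩ Qext r s V R D finv ε' = ∅ := by
        ext x
        rcases ε with e | ⟨e, he⟩ <;> rcases ε' with e' | ⟨e', he'⟩ <;>
          simp only [baseEdge] at h <;> subst h
        · exact absurd rfl hne
        · simp only [Qext, Bext, he', if_false, mem_inter_iff, mem_preimage, mem_diff,
            mem_empty_iff_false]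
          tauto
        · simp only [Qext, Bext, he, if_false, mem_inter_iff, mem_preimage, mem_diff,
            mem_empty_iff_false]
          tauto
        · exact absurd rfl hne
      rw [this, measure_empty]
    · exact measure_mono_null (inter_subset_inter (hQR ε) (hQR ε')) (hbs.disjR _ _ h)
  · intro ε
    have hs : sExt r s V ε = Sum.inl (s (baseEdge r V ε)) := by
      rcases ε with e | ⟨e, he⟩ <;> rfl
    rw [hs]
    refine measure_mono_null (diff_subset_diff_left (hQR ε)) ?_
    by_cases h : s (baseEdge r V ε) ∈ V
    · simpa only [Bext, h, if_true] using hbs.RsubD _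
    · have : R (baseEdge r V ε) \ Bext s V R D (Sum.inl (s (baseEdge r V ε))) = ∅ := by
        rw [diff_eq_empty]
        intro x hx
        simp only [Bext, h, if_false, mem_iUnion, mem_setOf_eq]
        exact ⟨_, rfl, hx⟩
      rw [this, measure_empty]
  · rintro w ⟨ε, hε⟩
    have hs : sExt r s V ε = Sum.inl (s (baseEdge r V ε)) := by
      rcases ε with e | ⟨e, he⟩ <;> rfl
    rw [← hε, hs, aux_UQ_eq hbs]
    by_cases h : s (baseEdge r V ε) ∈ V
    · simpa only [Bext, h, if_true] using hbs.CK _ h ⟨_, rfl⟩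
    · simp only [Bext, h, if_false, symmDiff_self, bot_eq_empty, measure_empty]
  · intro e h
    rw [aux_R_eq hbs e h, symmDiff_self, bot_eq_empty, measure_empty]
  · intro ε
    have hle : μ.restrict (Bext s V R D (rExt r V ε)) ≤ μ.restrict (D (r (baseEdge r V ε))) :=
      Measure.restrict_mono' (hBD ε) le_rfl
    have hleQ : μ.restrict (Qext r s V R D finv ε) ≤ μ.restrict (R (baseEdge r V ε)) :=
      Measure.restrict_mono (hQR ε) le_rfl
    have hinv : ∀ᵐ t ∂μ.restrict (Bext s V R D (rExt r V ε)),
        finv (baseEdge r V ε) (f (baseEdge r V ε) t) = t :=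
      ae_mono hle (hbs.inv_left _)
    refine ⟨?_, ?_, ae_mono hleQ (hbs.inv_right _), hinv, ?_, ?_⟩
    · filter_upwards [hinv, ae_restrict_mem (hBm _), ae_restrict_of_ae (hBD ε)] with t h1 h2 h3
      rw [hQ]
      refine ⟨hbs.mapsf _ (h3 h2), ?_⟩
      rw [mem_preimage, h1]
      exact h2
    · filter_upwards [ae_restrict_mem (hQm ε)] with x hx
      rw [hQ] at hx
      exact hx.2
    · exact (Measure.map_mono hle (hbs.measf _)).absolutelyContinuous.trans (hbs.ac_f _)
    · exact (Measure.map_mono hleQ (hbs.measfinv _)).absolutelyContinuous.trans (hbs.ac_finv _)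

end
end

section
/- Let g be a Markov interval map with g(Γ ∩ dom(g)) ⊆ Γ, let x ∈ E_g, and suppose the index i ∈ {1,…,n} satisfies â_{i ι(x)} = 0, i.e., (int I_i) ∩ g⁻¹(E_{ι(x)}) = ∅. Then I_i ∩ X = {y ∈ I_i : g(y) ∈ I_l ∩ X for some l with a_{il} = 1}. -/
open Set Function

section

/-- The domain `⋃_{j<n} I_j` of a Markov interval map, where `I_j = [a j, b j]`
(indices `j = 0, …, n-1` correspond to the intervals `I_1, …, I_n` of the paper). -/
def mDom (n : ℕ) (a b : ℕ → ℝ) : Set ℝ := ⋃ j, ⋃ (_ : j < n), Icc (a j) (b j)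

/-- The union of the (possibly empty) escape intervals `E_j = (b j, a (j+1))`,
for `j + 1 < n`. -/
def mEsc (n : ℕ) (a b : ℕ → ℝ) : Set ℝ := ⋃ j, ⋃ (_ : j + 1 < n), Ioo (b j) (a (j + 1))

/-- The set `Γ` of boundary points of the intervals `I_j = [a j, b j]`. -/
def mGamma (n : ℕ) (a b : ℕ → ℝ) : Set ℝ := {y | ∃ j < n, y = a j ∨ y = b j}

/-- `g^k(x)` is defined: the iterates `x, g(x), …, g^(k-1)(x)` all lie in the domain. -/
def IterDef (g : ℝ → ℝ) (Dm : Set ℝ) (k : ℕ) (x : ℝ) : Prop := ∀ m < k, g^[m] x ∈ Dm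

/-- `g` is a Markov interval map for the partition `I_j = [a j, b j]`, `j < n`, of the
interval `I = [a 0, b (n-1)]` minus the escape intervals `E_j = (b j, a (j+1))`:
on each `I_j`, `g` is continuous and strictly monotone, `im g = I`, and `g(I_i) ∩ dom g`
is a nonempty union of intervals of the partition (Markov property).  (Values of `g`
outside of its domain `⋃_j I_j` are irrelevant.) -/
structure IsMarkovMap (n : ℕ) (a b : ℕ → ℝ) (g : ℝ → ℝ) : Prop where
  two_le : 2 ≤ n
  lt : ∀ j < n, a j < b j
  le : ∀ j, j + 1 < n → b j ≤ a (j + 1)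
  mono : ∀ i < n, StrictMonoOn g (Icc (a i) (b i)) ∨ StrictAntiOn g (Icc (a i) (b i))
  cont : ∀ i < n, ContinuousOn g (Icc (a i) (b i))
  im : g '' mDom n a b = Icc (a 0) (b (n - 1))
  markov : ∀ i < n, ∃ S : Finset ℕ, S.Nonempty ∧ (∀ j ∈ S, j < n) ∧
    g '' Icc (a i) (b i) ∩ mDom n a b = ⋃ j ∈ S, Icc (a j) (b j)

/-- The transition matrix entry `a_{ij} = 1`, i.e. `g(int I_i) ⊇ int I_j`. -/
def TransOne (a b : ℕ → ℝ) (g : ℝ → ℝ) (i j : ℕ) : Prop :=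
  Ioo (a j) (b j) ⊆ g '' Ioo (a i) (b i)

/-- Given the final escape point `ex = e(x)` of the orbit of a point `x` of the escape
set, the set `X = {z ∈ I : g^k(z) = e(x)` for some `k ≥ 0}`. -/
def orbitSet (n : ℕ) (a b : ℕ → ℝ) (g : ℝ → ℝ) (ex : ℝ) : Set ℝ :=
  {z | z ∈ Icc (a 0) (b (n - 1)) ∧ ∃ k, IterDef g (mDom n a b) k z ∧ g^[k] z = ex}

theorem markov_le_aux {n : ℕ} {a b : ℕ → ℝ} {g : ℝ → ℝ} (hg : IsMarkovMap n a b g) :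
    ∀ l j, j < l → l < n → b j ≤ a l := by
  intro l
  induction l with
  | zero => intro j hj; omega
  | succ l ih =>
    intro j hj hl
    have h1 := hg.le l hl
    rcases Nat.lt_succ_iff_lt_or_eq.mp hj with h | h
    · have h2 := ih j h (by omega)
      have h3 := hg.lt l (by omega)
      linarith
    · subst h; exact h1

theorem mem_mDom_aux {n : ℕ} {a b : ℕ → ℝ} {y : ℝ} :
    y ∈ mDom n a b ↔ ∃ j < n, y ∈ Icc (a j) (b j) := by
  simp only [mDom, mem_iUnion, exists_prop]

theorem mGamma_sub_aux {n : ℕ} {a b : ℕ → ℝ} {g : ℝ → ℝ} (hg : IsMarkovMap n a b g)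
    {y : ℝ} (hy : y ∈ mGamma n a b) : y ∈ mDom n a b := by
  obtain ⟨j, hj, h⟩ := hy
  have h3 := hg.lt j hj
  refine mem_mDom_aux.2 ⟨j, hj, ?_⟩
  rcases h with h | h <;> subst h
  · exact ⟨le_rfl, h3.le⟩
  · exact ⟨h3.le, le_rfl⟩

theorem esc_not_mDom_aux {n : ℕ} {a b : ℕ → ℝ} {g : ℝ → ℝ} (hg : IsMarkovMap n a b g)
    {k : ℕ} (hk : k + 1 < n) {e : ℝ} (he : e ∈ Ioo (b k) (a (k + 1))) : e ∉ mDom n a b := by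
  intro h
  obtain ⟨j, hj, h1, h2⟩ := mem_mDom_aux.1 h
  obtain ⟨h3, h4⟩ := he
  rcases lt_trichotomy j k with h | h | h
  · have := markov_le_aux hg k j h (by omega)
    have := hg.lt k (by omega)
    linarith
  · subst h; linarith
  · rcases Nat.lt_or_eq_of_le (Nat.succ_le_of_lt h) with h | h
    · have := markov_le_aux hg j (k + 1) h hj
      have := hg.lt (k + 1) hk
      linarith
    · subst h; exact absurd h4 (not_lt.2 h1)

theorem int_not_mGamma_aux {n : ℕ} {a b : ℕ → ℝ} {g : ℝ → ℝ} (hg : IsMarkovMap n a b g)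
    {l : ℕ} (hl : l < n) {z : ℝ} (hz : z ∈ Ioo (a l) (b l)) : z ∉ mGamma n a b := by
  rintro ⟨j, hj, h⟩
  obtain ⟨h3, h4⟩ := hz
  have := hg.lt j hj
  rcases lt_trichotomy j l with h' | h' | h'
  · have := markov_le_aux hg l j h' hl
    rcases h with h | h <;> linarith
  · subst h'
    rcases h with h | h <;> linarith
  · have := markov_le_aux hg j l h' hj
    rcases h with h | h <;> linarith

theorem end_or_int_aux {n : ℕ} {a b : ℕ → ℝ} {i : ℕ} (hi : i < n) {y : ℝ}
    (hy : y ∈ Icc (a i) (b i)) : y ∈ Ioo (a i) (b i) ∨ y ∈ mGamma n a b := by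
  rcases eq_or_lt_of_le hy.1 with h | h
  · exact Or.inr ⟨i, hi, Or.inl h.symm⟩
  · rcases eq_or_lt_of_le hy.2 with h' | h'
    · exact Or.inr ⟨i, hi, Or.inr h'⟩
    · exact Or.inl ⟨h, h'⟩

theorem mem_I_aux {n : ℕ} {a b : ℕ → ℝ} {g : ℝ → ℝ} (hg : IsMarkovMap n a b g)
    {i : ℕ} (hi : i < n) {y : ℝ}
    (hy : y ∈ Icc (a i) (b i)) : y ∈ Icc (a 0) (b (n - 1)) := by
  obtain ⟨h1, h2⟩ := hy
  constructor
  · rcases Nat.eq_zero_or_pos i with h | h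
    · subst h; exact h1
    · have := markov_le_aux hg i 0 h hi
      have := hg.lt 0 (by omega)
      linarith
  · rcases Nat.lt_or_ge i (n - 1) with h | h
    · have := markov_le_aux hg (n - 1) i h (by omega)
      have := hg.lt (n - 1) (by omega)
      linarith
    · have : i = n - 1 := by omega
      subst this; exact h2

/-- Let `g` be a Markov interval map with `g(Γ ∩ dom g) ⊆ Γ`, let
`x ∈ E_g` with final escape point `e(x) = g^[τx] x ∈ E_{kι}` (`kι = ι(x)`), and suppose
that the index `i` satisfies `â_{i ι(x)} = 0`, i.e. `(int I_i) ∩ g⁻¹(E_{ι(x)}) = ∅`.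
Then `I_i ∩ X = {y ∈ I_i : g(y) ∈ I_l ∩ X` for some `l` with `a_{il} = 1}`. -/
theorem statement11 (n : ℕ) (a b : ℕ → ℝ) (g : ℝ → ℝ) (hg : IsMarkovMap n a b g)
    (hΓ : ∀ y ∈ mGamma n a b ∩ mDom n a b, g y ∈ mGamma n a b)
    (x : ℝ) (hxI : x ∈ Icc (a 0) (b (n - 1)))
    (τx : ℕ) (hτ1 : 1 ≤ τx) (hτdef : IterDef g (mDom n a b) τx x)
    (hτesc : g^[τx] x ∈ mEsc n a b)
    (hτmin : ∀ k, 1 ≤ k → IterDef g (mDom n a b) k x → g^[k] x ∈ mEsc n a b → τx ≤ k)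
    (kι : ℕ) (hkι : kι + 1 < n) (hexE : g^[τx] x ∈ Ioo (b kι) (a (kι + 1)))
    (i : ℕ) (hi : i < n)
    (hai : Ioo (a i) (b i) ∩ g ⁻¹' (Ioo (b kι) (a (kι + 1))) = ∅) :
    Icc (a i) (b i) ∩ orbitSet n a b g (g^[τx] x) =
      {y | y ∈ Icc (a i) (b i) ∧ ∃ l < n, TransOne a b g i l ∧
        g y ∈ Icc (a l) (b l) ∩ orbitSet n a b g (g^[τx] x)} := by
  have hE := esc_not_mDom_aux hg hkι hexE
  ext y
  constructor
  · rintro ⟨hy, hyI, k, hk, hke⟩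
    have hyD : y ∈ mDom n a b := mem_mDom_aux.2 ⟨i, hi, hy⟩
    refine ⟨hy, ?_⟩
    cases k with
    | zero =>
      simp only [iterate_zero, id] at hke
      exact absurd (hke ▸ hyD) hE
    | succ k =>
      have hgX : g y ∈ orbitSet n a b g (g^[τx] x) := by
        refine ⟨hg.im ▸ mem_image_of_mem g hyD, k, ?_, ?_⟩
        · intro m hm
          have := hk (m + 1) (by omega)
          rwa [iterate_succ_apply] at this
        · rwa [iterate_succ_apply] at hke
      have hgD : g y ∈ mDom n a b := by
        rcases Nat.eq_zero_or_pos k with h | h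
        · subst h
          rcases end_or_int_aux hi hy with h | h
          · exfalso
            have h2 : y ∈ Ioo (a i) (b i) ∩ g ⁻¹' (Ioo (b kι) (a (kι + 1))) := by
              refine ⟨h, ?_⟩
              rw [mem_preimage]
              have h3 : g y = g^[τx] x := by simpa using hke
              rw [h3]; exact hexE
            rw [hai] at h2
            exact h2
          · exact mGamma_sub_aux hg (hΓ y ⟨h, hyD⟩)
        · have := hk 1 (by omega)
          simpa using this
      obtain ⟨S, -, hSn, hS⟩ := hg.markov i hi
      have hmem : g y ∈ ⋃ j ∈ S, Icc (a j) (b j) := hS ▸ ⟨mem_image_of_mem g hy, hgD⟩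
      simp only [mem_iUnion] at hmem
      obtain ⟨l, hlS, hl⟩ := hmem
      refine ⟨l, hSn l hlS, ?_, hl, hgX⟩
      intro z hz
      have hz2 : z ∈ ⋃ j ∈ S, Icc (a j) (b j) := by
        simp only [mem_iUnion]
        exact ⟨l, hlS, Ioo_subset_Icc_self hz⟩
      rw [← hS] at hz2
      obtain ⟨⟨w, hw, hwz⟩, -⟩ := hz2
      refine ⟨w, ?_, hwz⟩
      rcases end_or_int_aux hi hw with h | h
      · exact h
      · have h2 := hΓ w ⟨h, mGamma_sub_aux hg h⟩
        rw [hwz] at h2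
        exact absurd h2 (int_not_mGamma_aux hg (hSn l hlS) hz)
  · rintro ⟨hy, l, hl, -, -, -, k, hk, hke⟩
    refine ⟨hy, mem_I_aux hg hi hy, k + 1, ?_, ?_⟩
    · intro m hm
      cases m with
      | zero => exact mem_mDom_aux.2 ⟨i, hi, hy⟩
      | succ m =>
        rw [iterate_succ_apply]
        exact hk m (by omega)
    · rw [iterate_succ_apply]; exact hke

end
end

section
/- Let g be a Markov interval map with g(Γ ∩ dom(g)) ⊆ Γ and x ∈ E_g. On the Hilbert space ℓ²(X): for each pair (i,j) with a_{ij} = 1 there is a unique bounded operator S_{ij} with S_{ij} δ_y = δ_{(g|_{I_i})⁻¹(y)} for y ∈ I_j ∩ X and S_{ij} δ_y = 0 for y ∈ X \ I_j; let P_i be multiplication by χ_{I_i ∩ X}. Then: (i) the P_i are self-adjoint idempotents with P_i P_j = 0 for i ≠ j; (ii) S_{ij}* S_{ij} = P_j; (iii) P_i S_{ij} S_{ij}* = S_{ij} S_{ij}* (i.e., S_{ij} S_{ij}* ≤ P_i), and in particular each S_{ij} is a partial isometry; and (iv) if i is such that â_{i ι(x)} = 0 and a_{ij} = 1 for at least one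 j, then P_i = Σ_{j : a_{ij}=1} S_{ij} S_{ij}*. -/
open Set Function

section

/-- The standard basis vector `δ_y` of `ℓ²(α)`. -/
noncomputable def diracVec {α : Type*} (y : α) : lp (fun _ : α => ℂ) 2 :=
  haveI := Classical.decEq α
  lp.single 2 y 1

/-- The defining property of the operator `S_{ij}` on `ℓ²(X)`:
`S_{ij} δ_y = δ_{(g|I_i)⁻¹ y}` for `y ∈ I_j ∩ X` and `S_{ij} δ_y = 0` for `y ∈ X \ I_j`;
here `wmap` is the inverse branch `(g|I_i)⁻¹` defined on `I_j ∩ X`. -/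
def IsShiftOp (n : ℕ) (a b : ℕ → ℝ) (g : ℝ → ℝ) (ex : ℝ) (j : ℕ)
    (wmap : ↥(orbitSet n a b g ex) → ↥(orbitSet n a b g ex))
    (S : lp (fun _ : ↥(orbitSet n a b g ex) => ℂ) 2 →L[ℂ]
      lp (fun _ : ↥(orbitSet n a b g ex) => ℂ) 2) : Prop :=
  ∀ y : ↥(orbitSet n a b g ex),
    ((y : ℝ) ∈ Icc (a j) (b j) → S (diracVec y) = diracVec (wmap y)) ∧
    ((y : ℝ) ∉ Icc (a j) (b j) → S (diracVec y) = 0)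

noncomputable abbrev L2 (α : Type*) := lp (fun _ : α => ℂ) 2

theorem dirac_self {α : Type*} (y : α) : (diracVec y : L2 α) y = 1 := by
  classical
  simp [diracVec]

theorem dirac_ne {α : Type*} {y z : α} (h : z ≠ y) : (diracVec y : L2 α) z = 0 := by
  classical
  simp [diracVec, h]

theorem inner_dirac {α : Type*} (y : α) (f : L2 α) : inner ℂ (diracVec y) f = f y := by
  classical
  unfold diracVec
  rw [lp.inner_single_left]
  simp

theorem inner_dirac_right {α : Type*} (y : α) (f : L2 α) :
    inner ℂ f (diracVec y) = star (f y) := by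
  rw [← inner_conj_symm, inner_dirac]
  rfl

theorem adj_apply {α : Type*} (S : L2 α →L[ℂ] L2 α) (f : L2 α) (y : α) :
    (ContinuousLinearMap.adjoint S f) y = inner ℂ (S (diracVec y)) f := by
  rw [← inner_dirac, ContinuousLinearMap.adjoint_inner_right]

theorem ext_dirac {α : Type*} {S T : L2 α →L[ℂ] L2 α}
    (h : ∀ y, S (diracVec y) = T (diracVec y)) : S = T := by
  have : ContinuousLinearMap.adjoint S = ContinuousLinearMap.adjoint T := by
    ext f y
    rw [adj_apply, adj_apply, h]
  exact ContinuousLinearMap.adjoint.injective this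

theorem two_bound {α : Type*} (D : Set α) (w : α → α) (hw : InjOn w D) (f : L2 α)
    (s : Finset α) : ∑ i ∈ s, ‖D.indicator (fun y => f (w y)) i‖ ^ (2 : ENNReal).toReal
      ≤ ‖f‖ ^ (2 : ENNReal).toReal := by
  classical
  have h2 : 0 < (2 : ENNReal).toReal := by norm_num
  calc _ = ∑ i ∈ s.filter (fun i => i ∈ D), ‖f (w i)‖ ^ (2 : ENNReal).toReal := by
        rw [Finset.sum_filter]
        refine Finset.sum_congr rfl fun i _ => ?_
        by_cases hi : i ∈ D <;> simp [hi]
    _ = ∑ z ∈ (s.filter (fun i => i ∈ D)).image w, ‖f z‖ ^ (2 : ENNReal).toReal := by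
        rw [Finset.sum_image]
        intro u hu v hv huv
        simp at hu hv
        exact hw hu.2 hv.2 huv
    _ ≤ _ := lp.sum_rpow_le_norm_rpow h2 f _

theorem exists_back {α : Type*} (D : Set α) (w : α → α) (hw : InjOn w D) :
    ∃ T : L2 α →L[ℂ] L2 α, ∀ f y, (T f) y = D.indicator (fun y => f (w y)) y := by
  have h2 : 0 < (2 : ENNReal).toReal := by norm_num
  let L : L2 α →ₗ[ℂ] L2 α :=
    { toFun := fun f => ⟨D.indicator (fun y => f (w y)), memℓp_gen' (two_bound D w hw f)⟩
      map_add' := by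
        intro f g
        ext y
        change D.indicator (fun y => (f + g) (w y)) y
          = D.indicator (fun y => f (w y)) y + D.indicator (fun y => g (w y)) y
        by_cases hy : y ∈ D <;> simp [hy]
      map_smul' := by
        intro c f
        ext y
        by_cases hy : y ∈ D <;> simp [hy] }
  refine ⟨L.mkContinuous 1 ?_, fun f y => rfl⟩
  intro f
  rw [one_mul]
  exact lp.norm_le_of_forall_sum_le h2 (norm_nonneg _) (two_bound D w hw f)

theorem exists_shift {α : Type*} (D : Set α) (w : α → α) (hw : InjOn w D) :
    ∃ S : L2 α →L[ℂ] L2 α, ∀ y, (y ∈ D → S (diracVec y) = diracVec (w y)) ∧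
      (y ∉ D → S (diracVec y) = 0) := by
  obtain ⟨T, hT⟩ := exists_back D w hw
  refine ⟨ContinuousLinearMap.adjoint T, fun y => ⟨fun hy => ?_, fun hy => ?_⟩⟩
  · ext z
    rw [adj_apply, inner_dirac_right, hT, indicator_of_mem hy]
    by_cases h : w y = z
    · subst h
      simp [dirac_self]
    · rw [dirac_ne h, dirac_ne (Ne.symm h)]
      simp
  · ext z
    rw [adj_apply, inner_dirac_right, hT, indicator_of_notMem hy]
    simp

section
variable {α : Type*} {D : Set α} {w : α → α} {S : L2 α →L[ℂ] L2 α}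

theorem adj_mem (hw : InjOn w D)
    (hS : ∀ y, (y ∈ D → S (diracVec y) = diracVec (w y)) ∧ (y ∉ D → S (diracVec y) = 0))
    {y : α} (hy : y ∈ D) :
    ContinuousLinearMap.adjoint S (diracVec (w y)) = diracVec y := by
  ext z
  rw [adj_apply, inner_dirac_right]
  by_cases hz : z ∈ D
  · rw [(hS z).1 hz]
    by_cases h : z = y
    · subst h
      simp [dirac_self]
    · rw [dirac_ne h, dirac_ne (fun h' => h (hw hz hy h'.symm))]
      simp
  · have hne : z ≠ y := fun h => hz (h ▸ hy)
    rw [(hS z).2 hz, dirac_ne hne]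
    simp

theorem adj_notMem
    (hS : ∀ y, (y ∈ D → S (diracVec y) = diracVec (w y)) ∧ (y ∉ D → S (diracVec y) = 0))
    {v : α} (hv : ∀ y ∈ D, w y ≠ v) :
    ContinuousLinearMap.adjoint S (diracVec v) = 0 := by
  ext z
  rw [adj_apply, inner_dirac_right]
  by_cases hz : z ∈ D
  · rw [(hS z).1 hz, dirac_ne (hv z hz).symm]
    simp
  · rw [(hS z).2 hz]
    simp

end

theorem P_mem {α : Type*} {P : L2 α →L[ℂ] L2 α} {c : α → ℂ}
    (hP : ∀ f y, (P f) y = c y * f y) (y : α) : P (diracVec y) = c y • diracVec y := by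
  ext z
  rw [hP]
  by_cases h : z = y
  · subst h; simp
  · simp [dirac_ne h]

section
variable {n : ℕ} {a b : ℕ → ℝ} {g : ℝ → ℝ}

theorem mk_le_step (hg : IsMarkovMap n a b g) {i j : ℕ} (hij : i < j) (hj : j < n) :
    b i ≤ a j := by
  induction j with
  | zero => omega
  | succ k ih =>
    rcases Nat.lt_succ_iff_lt_or_eq.1 hij with h | h
    · exact (ih h (by omega)).trans ((hg.lt k (by omega)).le.trans (hg.le k hj))
    · subst h; exact hg.le _ hj

theorem Icc_sub_dom {i : ℕ} (hi : i < n) : Icc (a i) (b i) ⊆ mDom n a b := by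
  intro z hz
  simp only [mDom, mem_iUnion]
  exact ⟨i, hi, hz⟩

theorem gamma_sub_dom (hg : IsMarkovMap n a b g) : mGamma n a b ⊆ mDom n a b := by
  rintro z ⟨j, hj, rfl | rfl⟩
  · exact Icc_sub_dom hj ⟨le_rfl, (hg.lt j hj).le⟩
  · exact Icc_sub_dom hj ⟨(hg.lt j hj).le, le_rfl⟩

theorem dom_not_esc (hg : IsMarkovMap n a b g) {z : ℝ} {k : ℕ} (hk : k + 1 < n)
    (hz : z ∈ Ioo (b k) (a (k + 1))) : z ∉ mDom n a b := by
  intro h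
  simp only [mDom, mem_iUnion] at h
  obtain ⟨j, hj, h1, h2⟩ := h
  rcases Nat.lt_or_ge k j with hkj | hkj
  · rcases Nat.lt_or_ge (k + 1) j with h' | h'
    · have := mk_le_step hg h' hj
      have := hg.lt (k + 1) hk
      linarith [hz.2]
    · have : j = k + 1 := by omega
      subst this
      linarith [hz.2]
  · rcases Nat.lt_or_ge j k with h' | h'
    · have := mk_le_step hg h' (by omega)
      have := hg.lt k (by omega)
      linarith [hz.1]
    · have : j = k := by omega
      subst this
      linarith [hz.1]

theorem gamma_not_int (hg : IsMarkovMap n a b g) {z : ℝ} {j : ℕ} (hj : j < n)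
    (hz : z ∈ Ioo (a j) (b j)) : z ∉ mGamma n a b := by
  rintro ⟨k, hk, h⟩
  have hk' := hg.lt k hk
  have h1 : a k ≤ z := by rcases h with h | h <;> linarith
  have h2 : z ≤ b k := by rcases h with h | h <;> linarith
  rcases lt_trichotomy k j with h' | h' | h'
  · have := mk_le_step hg h' hj
    linarith [hz.1]
  · subst h'
    rcases h with h | h <;> linarith [hz.1, hz.2]
  · have := mk_le_step hg h' hk
    linarith [hz.2]

theorem inter_gamma (hg : IsMarkovMap n a b g) {z : ℝ} {i j : ℕ} (hi : i < n) (hj : j < n)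
    (hij : i ≠ j) (h1 : z ∈ Icc (a i) (b i)) (h2 : z ∈ Icc (a j) (b j)) : z ∈ mGamma n a b := by
  rcases lt_or_gt_of_ne hij with h | h
  · have := mk_le_step hg h hj
    exact ⟨i, hi, Or.inr (by linarith [h1.2, h2.1])⟩
  · have := mk_le_step hg h hi
    exact ⟨j, hj, Or.inr (by linarith [h1.1, h2.2])⟩

theorem orbit_not_gamma (hg : IsMarkovMap n a b g)
    (hΓ : ∀ y ∈ mGamma n a b ∩ mDom n a b, g y ∈ mGamma n a b)
    {ex z : ℝ} {k : ℕ} (hk : k + 1 < n) (hex : ex ∈ Ioo (b k) (a (k + 1)))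
    (hz : z ∈ orbitSet n a b g ex) : z ∉ mGamma n a b := by
  intro h
  obtain ⟨-, m, -, hm⟩ := hz
  have key : ∀ m, g^[m] z ∈ mGamma n a b := by
    intro m
    induction m with
    | zero => exact h
    | succ m ih =>
      rw [Function.iterate_succ_apply']
      exact hΓ _ ⟨ih, gamma_sub_dom hg ih⟩
  exact dom_not_esc hg hk hex (hm ▸ gamma_sub_dom hg (key m))

theorem orbit_step (hg : IsMarkovMap n a b g)
    {ex z : ℝ} {k : ℕ} (hk : k + 1 < n) (hex : ex ∈ Ioo (b k) (a (k + 1)))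
    (hz : z ∈ orbitSet n a b g ex) (hd : z ∈ mDom n a b) :
    g z ∈ orbitSet n a b g ex := by
  obtain ⟨-, m, hm, hm'⟩ := hz
  refine ⟨hg.im ▸ mem_image_of_mem g hd, ?_⟩
  cases m with
  | zero =>
    simp only [Function.iterate_zero, id] at hm'
    exact absurd (hm' ▸ hd) (dom_not_esc hg hk hex)
  | succ m =>
    refine ⟨m, fun l hl => ?_, hm'⟩
    exact hm (l + 1) (by omega)

theorem orbit_dom {ex z : ℝ} (hz : z ∈ orbitSet n a b g ex) (hne : z ≠ ex) :
    z ∈ mDom n a b := by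
  obtain ⟨-, m, hm, hm'⟩ := hz
  cases m with
  | zero => exact absurd hm' hne
  | succ m => exact hm 0 (by omega)

theorem exists_trans (hg : IsMarkovMap n a b g)
    (hΓ : ∀ y ∈ mGamma n a b ∩ mDom n a b, g y ∈ mGamma n a b)
    {z : ℝ} {i : ℕ} (hi : i < n) (hz : z ∈ Icc (a i) (b i)) (hd : g z ∈ mDom n a b) :
    ∃ j, j < n ∧ TransOne a b g i j ∧ g z ∈ Icc (a j) (b j) := by
  obtain ⟨S, -, hS, hE⟩ := hg.markov i hi
  have h : g z ∈ ⋃ j ∈ S, Icc (a j) (b j) := hE ▸ ⟨mem_image_of_mem g hz, hd⟩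
  simp only [mem_iUnion] at h
  obtain ⟨j, hj, hzj⟩ := h
  refine ⟨j, hS j hj, fun v hv => ?_, hzj⟩
  have h' : v ∈ ⋃ j ∈ S, Icc (a j) (b j) := by
    simp only [mem_iUnion]
    exact ⟨j, hj, Ioo_subset_Icc_self hv⟩
  rw [← hE] at h'
  obtain ⟨⟨u, hu, rfl⟩, -⟩ := h'
  have hng := gamma_not_int hg (hS j hj) hv
  have hu' : u ∉ mGamma n a b := fun h => hng (hΓ _ ⟨h, gamma_sub_dom hg h⟩)
  refine ⟨u, ⟨lt_of_le_of_ne hu.1 ?_, lt_of_le_of_ne hu.2 ?_⟩, rfl⟩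
  · intro h; exact hu' ⟨i, hi, Or.inl h.symm⟩
  · intro h; exact hu' ⟨i, hi, Or.inr h⟩

end

open scoped Classical in
/-- On `ℓ²(X)`:  for each pair `(i,j)` with `a_{ij} = 1` there is a
unique bounded operator `S_{ij}` with `S_{ij} δ_y = δ_{(g|I_i)⁻¹ y}` for `y ∈ I_j ∩ X`
and `S_{ij} δ_y = 0` for `y ∈ X \ I_j`; with `P_i` multiplication by `χ_{I_i ∩ X}`:
(i) the `P_i` are self-adjoint idempotents with `P_i P_j = 0` for `i ≠ j`;
(ii) `S_{ij}* S_{ij} = P_j`;  (iii) `P_i S_{ij} S_{ij}* = S_{ij} S_{ij}*` (so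
`S_{ij} S_{ij}* ≤ P_i`) and `S_{ij} S_{ij}* S_{ij} = S_{ij}` (each `S_{ij}` is a partial
isometry);  (iv) if `â_{i ι(x)} = 0` and `i` emits at least one edge then
`P_i = Σ_{j : a_{ij} = 1} S_{ij} S_{ij}*`. -/
theorem statement14 (n : ℕ) (a b : ℕ → ℝ) (g : ℝ → ℝ) (hg : IsMarkovMap n a b g)
    (hΓ : ∀ y ∈ mGamma n a b ∩ mDom n a b, g y ∈ mGamma n a b)
    (x : ℝ) (hxI : x ∈ Icc (a 0) (b (n - 1)))
    (τx : ℕ) (hτ1 : 1 ≤ τx) (hτdef : IterDef g (mDom n a b) τx x)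
    (hτesc : g^[τx] x ∈ mEsc n a b)
    (hτmin : ∀ k, 1 ≤ k → IterDef g (mDom n a b) k x → g^[k] x ∈ mEsc n a b → τx ≤ k)
    (kι : ℕ) (hkι : kι + 1 < n) (hexE : g^[τx] x ∈ Ioo (b kι) (a (kι + 1)))
    (wmap : ℕ → ℕ → ↥(orbitSet n a b g (g^[τx] x)) → ↥(orbitSet n a b g (g^[τx] x)))
    (hw : ∀ i j, i < n → j < n → TransOne a b g i j →
      ∀ y : ↥(orbitSet n a b g (g^[τx] x)), (y : ℝ) ∈ Icc (a j) (b j) →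
        (wmap i j y : ℝ) ∈ Icc (a i) (b i) ∧ g (wmap i j y) = y ∧
        ∀ u : ↥(orbitSet n a b g (g^[τx] x)),
          (u : ℝ) ∈ Icc (a i) (b i) → g u = y → u = wmap i j y)
    (P : ℕ → (lp (fun _ : ↥(orbitSet n a b g (g^[τx] x)) => ℂ) 2 →L[ℂ]
      lp (fun _ : ↥(orbitSet n a b g (g^[τx] x)) => ℂ) 2))
    (hP : ∀ i, ∀ ψ : lp (fun _ : ↥(orbitSet n a b g (g^[τx] x)) => ℂ) 2,
      ∀ z : ↥(orbitSet n a b g (g^[τx] x)),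
        (P i ψ) z = (Icc (a i) (b i)).indicator (fun _ => (1 : ℂ)) (z : ℝ) * ψ z) :
    (∀ i j, i < n → j < n → TransOne a b g i j →
      ∃! S, IsShiftOp n a b g (g^[τx] x) j (wmap i j) S) ∧
    (∀ i, i < n → ContinuousLinearMap.adjoint (P i) = P i ∧ P i ∘L P i = P i ∧
      ∀ j, j < n → j ≠ i → P i ∘L P j = 0) ∧
    (∀ i j, i < n → j < n → TransOne a b g i j →
      ∀ S, IsShiftOp n a b g (g^[τx] x) j (wmap i j) S →
        ContinuousLinearMap.adjoint S ∘L S = P j ∧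
        P i ∘L (S ∘L ContinuousLinearMap.adjoint S) = S ∘L ContinuousLinearMap.adjoint S ∧
        S ∘L ContinuousLinearMap.adjoint S ∘L S = S) ∧
    (∀ i, i < n → Ioo (a i) (b i) ∩ g ⁻¹' (Ioo (b kι) (a (kι + 1))) = ∅ →
      (∃ j, j < n ∧ TransOne a b g i j) →
      ∀ Sc : ℕ → (lp (fun _ : ↥(orbitSet n a b g (g^[τx] x)) => ℂ) 2 →L[ℂ]
        lp (fun _ : ↥(orbitSet n a b g (g^[τx] x)) => ℂ) 2),
        (∀ j, j < n → TransOne a b g i j →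
          IsShiftOp n a b g (g^[τx] x) j (wmap i j) (Sc j)) →
        P i = ∑ j ∈ (Finset.range n).filter (fun j => TransOne a b g i j),
          Sc j ∘L ContinuousLinearMap.adjoint (Sc j)) := by
  have hng : ∀ z : ↥(orbitSet n a b g (g^[τx] x)), (z : ℝ) ∉ mGamma n a b := fun z =>
    orbit_not_gamma hg hΓ hkι hexE z.2
  have hinj : ∀ i j, i < n → j < n → TransOne a b g i j →
      InjOn (wmap i j) {y : ↥(orbitSet n a b g (g^[τx] x)) | (y : ℝ) ∈ Icc (a j) (b j)} := by
    intro i j hi hj ht u hu v hv huv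
    have h1 := (hw i j hi hj ht u hu).2.1
    have h2 := (hw i j hi hj ht v hv).2.1
    rw [huv, h2] at h1
    exact Subtype.ext h1.symm
  have hPin : ∀ i, ∀ y : ↥(orbitSet n a b g (g^[τx] x)), (y : ℝ) ∈ Icc (a i) (b i) →
      P i (diracVec y) = diracVec y := by
    intro i y hy
    rw [P_mem (hP i), indicator_of_mem hy, one_smul]
  have hPout : ∀ i, ∀ y : ↥(orbitSet n a b g (g^[τx] x)), (y : ℝ) ∉ Icc (a i) (b i) →
      P i (diracVec y) = 0 := by
    intro i y hy
    rw [P_mem (hP i), indicator_of_notMem hy, zero_smul]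
  refine ⟨?_, ?_, ?_, ?_⟩
  · intro i j hi hj ht
    obtain ⟨S, hS⟩ := exists_shift _ _ (hinj i j hi hj ht)
    refine ⟨S, hS, fun T hT => ext_dirac fun y => ?_⟩
    by_cases hy : (y : ℝ) ∈ Icc (a j) (b j)
    · rw [(hT y).1 hy, (hS y).1 hy]
    · rw [(hT y).2 hy, (hS y).2 hy]
  · intro i hi
    refine ⟨?_, ?_, ?_⟩
    · ext f y
      rw [adj_apply, hP]
      by_cases hy : (y : ℝ) ∈ Icc (a i) (b i)
      · rw [hPin i y hy, inner_dirac, indicator_of_mem hy, one_mul]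
      · rw [hPout i y hy, inner_zero_left, indicator_of_notMem hy, zero_mul]
    · refine ext_dirac fun y => ?_
      rw [ContinuousLinearMap.comp_apply]
      by_cases hy : (y : ℝ) ∈ Icc (a i) (b i)
      · rw [hPin i y hy, hPin i y hy]
      · rw [hPout i y hy, map_zero]
    · intro j hj hji
      refine ext_dirac fun y => ?_
      rw [ContinuousLinearMap.comp_apply, ContinuousLinearMap.zero_apply]
      by_cases hy : (y : ℝ) ∈ Icc (a j) (b j)
      · rw [hPin j y hy]
        exact hPout i y fun h => hng y (inter_gamma hg hj hi hji hy h)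
      · rw [hPout j y hy, map_zero]
  · intro i j hi hj ht S hS
    refine ⟨?_, ?_, ?_⟩
    · refine ext_dirac fun y => ?_
      rw [ContinuousLinearMap.comp_apply]
      by_cases hy : (y : ℝ) ∈ Icc (a j) (b j)
      · rw [hPin j y hy, (hS y).1 hy]
        exact adj_mem (hinj i j hi hj ht) hS hy
      · rw [hPout j y hy, (hS y).2 hy, map_zero]
    · refine ext_dirac fun z => ?_
      simp only [ContinuousLinearMap.comp_apply]
      by_cases hz : ∃ y : ↥(orbitSet n a b g (g^[τx] x)),
          (y : ℝ) ∈ Icc (a j) (b j) ∧ wmap i j y = z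
      · obtain ⟨y, hy, rfl⟩ := hz
        rw [adj_mem (hinj i j hi hj ht) hS hy, (hS y).1 hy]
        exact hPin i _ (hw i j hi hj ht y hy).1
      · rw [adj_notMem (D := {y : ↥(orbitSet n a b g (g^[τx] x)) | (y : ℝ) ∈ Icc (a j) (b j)})
          hS (fun y hy h => hz ⟨y, hy, h⟩)]
        simp
    · refine ext_dirac fun y => ?_
      simp only [ContinuousLinearMap.comp_apply]
      by_cases hy : (y : ℝ) ∈ Icc (a j) (b j)
      · rw [(hS y).1 hy, adj_mem (hinj i j hi hj ht) hS hy, (hS y).1 hy]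
      · rw [(hS y).2 hy, map_zero, map_zero]
  · intro i hi hemp _ Sc hSc
    refine ext_dirac fun z => ?_
    rw [ContinuousLinearMap.sum_apply]
    simp only [ContinuousLinearMap.comp_apply]
    by_cases hz : (z : ℝ) ∈ Icc (a i) (b i)
    · rw [hPin i z hz]
      have hgX := orbit_step hg hkι hexE z.2 (Icc_sub_dom hi hz)
      have hzo : (z : ℝ) ∈ Ioo (a i) (b i) := by
        refine ⟨lt_of_le_of_ne hz.1 ?_, lt_of_le_of_ne hz.2 ?_⟩
        · intro h; exact hng z ⟨i, hi, Or.inl h.symm⟩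
        · intro h; exact hng z ⟨i, hi, Or.inr h⟩
      have hgd : g z ∈ mDom n a b := by
        refine orbit_dom hgX fun h => ?_
        have : (z : ℝ) ∈ Ioo (a i) (b i) ∩ g ⁻¹' (Ioo (b kι) (a (kι + 1))) :=
          ⟨hzo, by rw [mem_preimage, h]; exact hexE⟩
        rw [hemp] at this
        exact this
      obtain ⟨j, hj, ht, hgj⟩ := exists_trans hg hΓ hi hz hgd
      have hzw : z = wmap i j ⟨g z, hgX⟩ := (hw i j hi hj ht ⟨g z, hgX⟩ hgj).2.2 z hz rfl
      have hSj := hSc j hj ht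
      rw [Finset.sum_eq_single j]
      · have h1 : ContinuousLinearMap.adjoint (Sc j) (diracVec z) = diracVec ⟨g z, hgX⟩ := by
          have := adj_mem (hinj i j hi hj ht) hSj (y := ⟨g z, hgX⟩) hgj
          rwa [← hzw] at this
        rw [h1, (hSj _).1 hgj, ← hzw]
      · intro l hl hlj
        rw [Finset.mem_filter, Finset.mem_range] at hl
        rw [adj_notMem (D := {y : ↥(orbitSet n a b g (g^[τx] x)) | (y : ℝ) ∈ Icc (a l) (b l)})
          (hSc l hl.1 hl.2), map_zero]
        intro y hy h
        have hgy := (hw i l hi hl.1 hl.2 y hy).2.1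
        rw [h] at hgy
        exact hng y (inter_gamma hg hl.1 hj hlj hy (hgy ▸ hgj))
      · intro h
        exact absurd (Finset.mem_filter.2 ⟨Finset.mem_range.2 hj, ht⟩) h
    · rw [hPout i z hz]
      symm
      refine Finset.sum_eq_zero fun l hl => ?_
      rw [Finset.mem_filter, Finset.mem_range] at hl
      rw [adj_notMem (D := {y : ↥(orbitSet n a b g (g^[τx] x)) | (y : ℝ) ∈ Icc (a l) (b l)})
          (hSc l hl.1 hl.2), map_zero]
      intro y hy h
      exact hz (h ▸ (hw i l hi hl.1 hl.2 y hy).1)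

end
end
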